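/- arXiv:2309.09188 — 5 statements merged into one kernel-verified Lean document; each statement's English description precedes it below -/
import Mathlib

section
/- Let G be a finite simple graph on vertex set [n] whose edge ideal I(G) ⊂ S has a linear resolution, and let x_1 > x_2 > ··· > x_n be a perfect elimination order of the complementary graph G^c. Then the colon ideal (I(G) : x_1) equals the prime ideal (x_j : j ∈ N_G(1)) generated by the variables indexed by the open neighborhood of vertex 1 in G. -/
open MvPolynomial

noncomputable section

variable (K : Type*) [Field K]

/-- The set of associated primes of `S/I`. -/
def assPrimes {σ : Type*} (I : Ideal (MvPolynomial σ K)) : Set (Ideal (MvPolynomial σ K)) :=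
  associatedPrimes (MvPolynomial σ K) (MvPolynomial σ K ⧸ I)

/-- The v-number of `I` at a prime `p`:
`min {d : ∃ homogeneous f of degree d with (I : f) = p}`. -/
def vNumberAt {σ : Type*} (I p : Ideal (MvPolynomial σ K)) : ℕ :=
  sInf {d | ∃ f : MvPolynomial σ K, f.IsHomogeneous d ∧ I.colon (Ideal.span {f}) = p}

/-- The v-number of `I`:
`min {d : ∃ homogeneous f of degree d with (I : f) ∈ Ass(I)}`. -/
def vNumber {σ : Type*} (I : Ideal (MvPolynomial σ K)) : ℕ :=
  sInf {d | ∃ f : MvPolynomial σ K, f.IsHomogeneous d ∧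
    I.colon (Ideal.span {f}) ∈ assPrimes K I}

/-- The initial degree `α(I) = min {d : I_d ≠ 0}`. -/
def initialDegree {σ : Type*} (I : Ideal (MvPolynomial σ K)) : ℕ :=
  sInf {d | ∃ f ∈ I, f ≠ 0 ∧ f.IsHomogeneous d}

/-- `I` has a `d`-linear (free) resolution: there is a free resolution
`⋯ → F_1 → F_0 → I → 0` in which `F_0` has a basis mapping to homogeneous generators of
degree `d` and all the syzygy matrices consist of homogeneous linear forms (so `F_i` is
generated in degree `d + i`).  This happens iff the minimal graded free resolution of `I`
is linear, i.e. `β_{i,j}(I) = 0` for `j ≠ i + d`. -/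
def HasLinearResolution {σ : Type*} (I : Ideal (MvPolynomial σ K)) (d : ℕ) : Prop :=
  ∃ (b : ℕ → ℕ) (g : Fin (b 0) → MvPolynomial σ K)
    (M : ∀ i : ℕ, Matrix (Fin (b i)) (Fin (b (i + 1))) (MvPolynomial σ K)),
    (∀ j, (g j).IsHomogeneous d) ∧
    Ideal.span (Set.range g) = I ∧
    (∀ i j l, ((M i) j l).IsHomogeneous 1) ∧
    (∀ v : Fin (b 0) → MvPolynomial σ K,
      (∑ j, v j * g j) = 0 ↔ ∃ w, (M 0).mulVec w = v) ∧
    (∀ (i : ℕ) (v : Fin (b (i + 1)) → MvPolynomial σ K),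
      (M i).mulVec v = 0 ↔ ∃ w, (M (i + 1)).mulVec w = v)

/-- The edge ideal `I(G) = (x_i x_j : {i,j} ∈ E(G))` of a finite simple graph `G`. -/
def edgeIdeal {n : ℕ} (G : SimpleGraph (Fin n)) : Ideal (MvPolynomial (Fin n) K) :=
  Ideal.span {f | ∃ i j, G.Adj i j ∧ f = X i * X j}

/-- If the edge ideal `I(G)` has a linear resolution and `x_1 > x_2 > ⋯ > x_n` is a perfect
elimination order of the complementary graph `G^c`, then
`(I(G) : x_1) = (x_j : j ∈ N_G(1))`. -/
theorem stmt12 {n : ℕ} (hn : 0 < n) (G : SimpleGraph (Fin n))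
    (hlin : HasLinearResolution K (edgeIdeal K G) 2)
    (hpeo : ∀ i j k : Fin n, i < j → i < k → j ≠ k →
      Gᶜ.Adj i j → Gᶜ.Adj i k → Gᶜ.Adj j k) :
    (edgeIdeal K G).colon (Ideal.span {(X (⟨0, hn⟩ : Fin n) : MvPolynomial (Fin n) K)}) =
      Ideal.span ((fun j => (X j : MvPolynomial (Fin n) K)) ''
        {j | G.Adj ⟨0, hn⟩ j}) := by
  have hle : edgeIdeal K G ≤ Ideal.span ((fun j => (X j : MvPolynomial (Fin n) K)) ''
        {j | G.Adj ⟨0, hn⟩ j}) := by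
    refine Ideal.span_le.2 ?_
    rintro f ⟨i, j, hij, rfl⟩
    have key : G.Adj ⟨0, hn⟩ i ∨ G.Adj ⟨0, hn⟩ j := by
      by_contra hcon
      rw [not_or] at hcon
      obtain ⟨h1, h2⟩ := hcon
      have hi : (⟨0, hn⟩ : Fin n) ≠ i := by
        rintro rfl
        exact h2 hij
      have hj : (⟨0, hn⟩ : Fin n) ≠ j := by
        rintro rfl
        exact h1 hij.symm
      have hlt : ∀ a : Fin n, (⟨0, hn⟩ : Fin n) ≠ a → (⟨0, hn⟩ : Fin n) < a :=
        fun a ha => lt_of_le_of_ne (Fin.mk_le_of_le_val (Nat.zero_le _)) ha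
      have h := hpeo ⟨0, hn⟩ i j (hlt i hi) (hlt j hj) hij.ne
        ((SimpleGraph.compl_adj G _ _).2 ⟨hi, h1⟩) ((SimpleGraph.compl_adj G _ _).2 ⟨hj, h2⟩)
      exact ((SimpleGraph.compl_adj G _ _).1 h).2 hij
    rcases key with h | h
    · exact Ideal.mul_mem_right _ _ (Ideal.subset_span ⟨i, h, rfl⟩)
    · exact Ideal.mul_mem_left _ _ (Ideal.subset_span ⟨j, h, rfl⟩)
  apply le_antisymm
  · intro f hf
    have h1 : f * X (⟨0, hn⟩ : Fin n) ∈ edgeIdeal K G := by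
      have := Submodule.mem_colon.1 hf (X (⟨0, hn⟩ : Fin n))
        (Ideal.subset_span (Set.mem_singleton _))
      simpa [smul_eq_mul] using this
    have h2 := hle h1
    rw [mem_ideal_span_X_image] at h2 ⊢
    intro m hm
    obtain ⟨i, hi, hmi⟩ := h2 (m + Finsupp.single ⟨0, hn⟩ 1) (by
      rw [mem_support_iff, coeff_mul_X]
      exact mem_support_iff.1 hm)
    refine ⟨i, hi, ?_⟩
    have hne : (⟨0, hn⟩ : Fin n) ≠ i := SimpleGraph.Adj.ne hi
    simpa [Finsupp.single_apply, hne] using hmi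
  · refine Ideal.span_le.2 ?_
    rintro f ⟨j, hj, rfl⟩
    refine Submodule.mem_colon.2 ?_
    intro p hp
    obtain ⟨q, rfl⟩ := Ideal.mem_span_singleton'.1 hp
    have h : (X (⟨0, hn⟩ : Fin n) * X j : MvPolynomial (Fin n) K) ∈ edgeIdeal K G :=
      Ideal.subset_span ⟨_, _, hj, rfl⟩
    have h' := Ideal.mul_mem_left _ q h
    have e : (X j : MvPolynomial (Fin n) K) • (q * X (⟨0, hn⟩ : Fin n))
        = q * (X (⟨0, hn⟩ : Fin n) * X j) := by
      rw [smul_eq_mul]; ring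
    simpa only [e] using h'

end
end

section
/- Let G be a finite simple graph whose edge ideal I(G) ⊂ S has a linear resolution. Then v(I(G)) = 1. -/
open MvPolynomial

noncomputable section

variable (K : Type*) [Field K]

/-! ### Partial substitutions and division -/

/-- Substitute zero for the variables with index below `k`. -/
def subLow {n : ℕ} (k : ℕ) : MvPolynomial (Fin n) K →ₐ[K] MvPolynomial (Fin n) K :=
  aeval (fun u => if u.val < k then 0 else X u)

/-- Substitute zero for the variables below `m`, then divide by `X m`. -/
def lowDiv {n : ℕ} (m : Fin n) (p : MvPolynomial (Fin n) K) : MvPolynomial (Fin n) K :=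
  (subLow K m.val p).divMonomial (Finsupp.single m 1)

theorem lowDiv_add {n : ℕ} (m : Fin n) (p q : MvPolynomial (Fin n) K) :
    lowDiv K m (p + q) = lowDiv K m p + lowDiv K m q := by
  simp [lowDiv, add_divMonomial]

theorem lowDiv_zero {n : ℕ} (m : Fin n) : lowDiv K m 0 = 0 := by
  simp [lowDiv]

theorem lowDiv_neg {n : ℕ} (m : Fin n) (p : MvPolynomial (Fin n) K) :
    lowDiv K m (-p) = -lowDiv K m p := by
  have h := lowDiv_add K m p (-p)
  rw [add_neg_cancel, lowDiv_zero] at h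
  exact (neg_eq_of_add_eq_zero_right h.symm).symm

theorem lowDiv_sum {n : ℕ} (m : Fin n) {ι : Type*} (s : Finset ι)
    (f : ι → MvPolynomial (Fin n) K) :
    lowDiv K m (∑ i ∈ s, f i) = ∑ i ∈ s, lowDiv K m (f i) := by
  classical
  induction s using Finset.induction_on with
  | empty => simp [lowDiv_zero]
  | insert a s ha ih => rw [Finset.sum_insert ha, Finset.sum_insert ha, lowDiv_add, ih]

theorem lowDiv_X_self {n : ℕ} (m : Fin n) (p : MvPolynomial (Fin n) K) :
    lowDiv K m (X m * p) = subLow K m.val p := by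
  simp [lowDiv, subLow, X_mul_divMonomial]

theorem lowDiv_X_lt {n : ℕ} {v m : Fin n} (h : v < m) (p : MvPolynomial (Fin n) K) :
    lowDiv K m (X v * p) = 0 := by
  simp [lowDiv, subLow, h]

theorem X_mul_divMonomial_ne {n : ℕ} {v m : Fin n} (h : v ≠ m) (q : MvPolynomial (Fin n) K) :
    (X v * q).divMonomial (Finsupp.single m 1) = X v * q.divMonomial (Finsupp.single m 1) := by
  classical
  ext s
  rw [coeff_divMonomial, coeff_X_mul', coeff_X_mul']
  have hs : (v ∈ (Finsupp.single m 1 + s).support) ↔ v ∈ s.support := by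
    simp [h.symm]
  by_cases hv : v ∈ s.support
  · rw [if_pos hv, if_pos (hs.2 hv), coeff_divMonomial]
    congr 1
    ext u
    simp only [Finsupp.mem_support_iff] at hv
    simp only [Finsupp.coe_tsub, Finsupp.coe_add, Pi.sub_apply, Pi.add_apply,
      Finsupp.single_apply]
    split_ifs <;> omega
  · rw [if_neg hv, if_neg (fun hc => hv (hs.1 hc))]

theorem lowDiv_X_gt {n : ℕ} {v m : Fin n} (h : m < v) (p : MvPolynomial (Fin n) K) :
    lowDiv K m (X v * p) = X v * lowDiv K m p := by
  have h' : ¬ v.val < m.val := not_lt.2 (le_of_lt h)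
  unfold lowDiv
  rw [map_mul, show subLow K m.val (X v) = X v by simp [subLow]; exact fun h => absurd h h']
  exact X_mul_divMonomial_ne K h.ne' _

theorem X_mul_lowDiv {n : ℕ} (v : Fin n) (p : MvPolynomial (Fin n) K) :
    X v * lowDiv K v p = subLow K v.val p - subLow K (v.val + 1) p := by
  induction p using MvPolynomial.induction_on with
  | C a =>
    have : lowDiv K v (C a) = 0 := by
      classical
      ext s
      simp only [lowDiv, subLow, algHom_C, coeff_divMonomial, algebraMap_eq, coeff_C, coeff_zero]
      rw [if_neg]
      intro h
      have := DFunLike.congr_fun h v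
      simp at this
      omega
    rw [this]
    simp [subLow]
  | add p q hp hq =>
    rw [lowDiv_add, mul_add, hp, hq, map_add, map_add]; ring
  | mul_X p u hp =>
    rw [mul_comm p]
    rcases lt_trichotomy u v with h | h | h
    · rw [lowDiv_X_lt K h]
      simp [subLow, h, h.le]
    · subst h
      rw [lowDiv_X_self]
      simp [subLow]
    · have h' : ¬ u.val < v.val := not_lt.2 (le_of_lt h)
      have h2 : ¬ u.val < v.val + 1 := by have : v.val < u.val := h; omega
      rw [lowDiv_X_gt K h, mul_left_comm, hp]
      simp only [subLow, map_mul, aeval_X, h', h2, if_false]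
      ring

theorem sum_X_lowDiv {n : ℕ} (p : MvPolynomial (Fin n) K) (k : ℕ) (hk : k ≤ n) :
    ∑ v : Fin n with v.val < k, X v * lowDiv K v p = p - subLow K k p := by
  induction k with
  | zero =>
    have : subLow K 0 p = p := by
      simp [subLow]
    simp [this]
  | succ k ih =>
    have hs : (Finset.univ.filter (fun v : Fin n => v.val < k + 1)) =
        insert (⟨k, hk⟩ : Fin n) (Finset.univ.filter (fun v : Fin n => v.val < k)) := by
      ext v
      simp only [Finset.mem_filter, Finset.mem_univ, true_and, Finset.mem_insert, Fin.ext_iff]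
      omega
    rw [hs, Finset.sum_insert (by simp), ih (by omega), X_mul_lowDiv]
    simp

theorem sum_X_lowDiv_univ {n : ℕ} (p : MvPolynomial (Fin n) K) (hp : coeff 0 p = 0) :
    ∑ v : Fin n, X v * lowDiv K v p = p := by
  have h := sum_X_lowDiv K p n le_rfl
  have h1 : (Finset.univ.filter (fun v : Fin n => v.val < n)) = Finset.univ := by
    ext v; simp
  rw [h1] at h
  have h2 : subLow K n p = C (coeff 0 p) := by
    have : (fun u : Fin n => if u.val < n then (0 : MvPolynomial (Fin n) K) else X u)
        = fun _ => 0 := by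
      funext u; simp
    rw [subLow, this]
    change aeval (0 : Fin n → MvPolynomial (Fin n) K) p = _
    rw [aeval_zero]; rfl
  rw [h, h2, hp]; simp

/-! ### The Koszul complex -/

/-- The sign of `v` relative to `T`. -/
def ksign {n : ℕ} (v : Fin n) (T : Finset (Fin n)) : MvPolynomial (Fin n) K :=
  (-1) ^ (T.filter (fun u => u < v)).card

/-- The Koszul differential (wedge with the sum of `x_v e_v`). -/
def kosz {n : ℕ} {N : Type*} [AddCommGroup N] [Module (MvPolynomial (Fin n) K) N]
    (c : Finset (Fin n) → N) (T : Finset (Fin n)) : N :=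
  ∑ v ∈ T, (ksign K v T * X v) • c (T.erase v)

theorem ksign_sq {n : ℕ} (v : Fin n) (T : Finset (Fin n)) : ksign K v T * ksign K v T = 1 := by
  rw [ksign, ← pow_add, ← two_mul, pow_mul]; simp

theorem ksign_erase_ge {n : ℕ} {u v : Fin n} (T : Finset (Fin n)) (h : v ≤ u) :
    ksign K v (T.erase u) = ksign K v T := by
  unfold ksign
  congr 2
  ext w
  simp only [Finset.mem_filter, Finset.mem_erase]
  constructor
  · rintro ⟨⟨_, h1⟩, h2⟩; exact ⟨h1, h2⟩
  · rintro ⟨h1, h2⟩; exact ⟨⟨(lt_of_lt_of_le h2 h).ne, h1⟩, h2⟩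

theorem ksign_erase_lt {n : ℕ} {u v : Fin n} (T : Finset (Fin n)) (hu : u ∈ T) (h : u < v) :
    ksign K v (T.erase u) = - ksign K v T := by
  unfold ksign
  have : T.filter (fun w => w < v) = insert u ((T.erase u).filter (fun w => w < v)) := by
    ext w
    simp only [Finset.mem_filter, Finset.mem_erase, Finset.mem_insert]
    constructor
    · rintro ⟨h1, h2⟩
      by_cases hw : w = u
      · exact Or.inl hw
      · exact Or.inr ⟨⟨hw, h1⟩, h2⟩
    · rintro (rfl | ⟨⟨_, h1⟩, h2⟩)
      · exact ⟨hu, h⟩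
      · exact ⟨h1, h2⟩
  rw [this, Finset.card_insert_of_notMem (by simp), pow_succ]; simp

theorem kosz_comm {n : ℕ} {N N' : Type*} [AddCommGroup N] [Module (MvPolynomial (Fin n) K) N]
    [AddCommGroup N'] [Module (MvPolynomial (Fin n) K) N']
    (L : N →ₗ[MvPolynomial (Fin n) K] N') (c : Finset (Fin n) → N) (T : Finset (Fin n)) :
    kosz K (fun T => L (c T)) T = L (kosz K c T) := by
  simp [kosz, map_sum]

theorem kosz_sub {n : ℕ} {N : Type*} [AddCommGroup N] [Module (MvPolynomial (Fin n) K) N]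
    (c c' : Finset (Fin n) → N) (T : Finset (Fin n)) :
    kosz K (fun T => c T - c' T) T = kosz K c T - kosz K c' T := by
  simp [kosz, smul_sub]

theorem kosz_add {n : ℕ} {N : Type*} [AddCommGroup N] [Module (MvPolynomial (Fin n) K) N]
    (c c' : Finset (Fin n) → N) (T : Finset (Fin n)) :
    kosz K (fun T => c T + c' T) T = kosz K c T + kosz K c' T := by
  simp [kosz, smul_add, Finset.sum_add_distrib]

theorem kosz_kosz {n : ℕ} {N : Type*} [AddCommGroup N] [Module (MvPolynomial (Fin n) K) N]
    (c : Finset (Fin n) → N) (T : Finset (Fin n)) :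
    kosz K (kosz K c) T = 0 := by
  have h1 : kosz K (kosz K c) T = ∑ p ∈ T.sigma (fun v => T.erase v),
      ((ksign K p.1 T * X p.1) * (ksign K p.2 (T.erase p.1) * X p.2)) •
        c ((T.erase p.1).erase p.2) := by
    rw [Finset.sum_sigma]
    unfold kosz
    refine Finset.sum_congr rfl fun v _ => ?_
    rw [Finset.smul_sum]
    refine Finset.sum_congr rfl fun u _ => ?_
    rw [smul_smul]
  rw [h1]
  refine Finset.sum_involution (fun p _ => ⟨p.2, p.1⟩) ?_ ?_ ?_ ?_
  · rintro ⟨v, u⟩ hp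
    simp only [Finset.mem_sigma, Finset.mem_erase] at hp
    obtain ⟨hv, huv, hu⟩ := hp
    simp only
    rw [Finset.erase_right_comm, ← add_smul]
    rcases lt_or_gt_of_ne huv with h | h
    · rw [ksign_erase_ge K T h.le, ksign_erase_lt K T hu h]
      rw [show ∀ a b x y : MvPolynomial (Fin n) K, (a * x) * (b * y) + (b * y) * (-a * x) = 0
        by intros; ring, zero_smul]
    · rw [ksign_erase_ge K T h.le, ksign_erase_lt K T hv h]
      rw [show ∀ a b x y : MvPolynomial (Fin n) K, (a * x) * (-b * y) + (b * y) * (a * x) = 0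
        by intros; ring, zero_smul]
  · rintro ⟨v, u⟩ hp _ h
    simp only [Finset.mem_sigma, Finset.mem_erase] at hp
    simp only [Sigma.mk.injEq] at h
    exact hp.2.1 h.1
  · rintro ⟨v, u⟩ hp
    simp only [Finset.mem_sigma, Finset.mem_erase] at hp ⊢
    exact ⟨hp.2.2, hp.2.1.symm, hp.1⟩
  · rintro ⟨v, u⟩ hp
    rfl

/-- The contracting homotopy. -/
def khom {n : ℕ} (c : Finset (Fin n) → MvPolynomial (Fin n) K) (T : Finset (Fin n)) :
    MvPolynomial (Fin n) K :=
  if h : (Tᶜ).Nonempty then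
    ksign K ((Tᶜ).min' h) T * lowDiv K ((Tᶜ).min' h) (c (insert ((Tᶜ).min' h) T))
  else 0

theorem khom_of_min {n : ℕ} (c : Finset (Fin n) → MvPolynomial (Fin n) K) (T : Finset (Fin n))
    (m : Fin n) (hm : m ∉ T) (hlt : ∀ v < m, v ∈ T) :
    khom K c T = ksign K m T * lowDiv K m (c (insert m T)) := by
  have hne : (Tᶜ).Nonempty := ⟨m, by simpa using hm⟩
  have : (Tᶜ).min' hne = m := by
    apply le_antisymm
    · exact Finset.min'_le _ _ (by simpa using hm)
    · by_contra hc
      push Not at hc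
      have h1 := hlt _ hc
      have h2 := Finset.min'_mem _ hne
      rw [Finset.mem_compl] at h2
      exact h2 h1
  rw [khom, dif_pos hne, this]

theorem lowDiv_ksign {n : ℕ} (m v : Fin n) (T : Finset (Fin n)) (p : MvPolynomial (Fin n) K) :
    lowDiv K m (ksign K v T * p) = ksign K v T * lowDiv K m p := by
  unfold ksign
  rcases neg_one_pow_eq_or (MvPolynomial (Fin n) K) (T.filter (fun u => u < v)).card with h | h
  · rw [h]; simp
  · rw [h]; simp [lowDiv_neg]

theorem kosz_exact {n : ℕ} (c : Finset (Fin n) → MvPolynomial (Fin n) K)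
    (hc : ∀ T, kosz K c T = 0) (h0 : coeff 0 (c Finset.univ) = 0) (T : Finset (Fin n)) :
    kosz K (khom K c) T = c T := by
  by_cases hT : T = Finset.univ
  · subst hT
    rw [← sum_X_lowDiv_univ K (c Finset.univ) h0]
    unfold kosz
    refine Finset.sum_congr rfl fun v _ => ?_
    rw [khom_of_min K c _ v (by simp) (fun w hw => by simp [hw.ne]),
      Finset.insert_erase (Finset.mem_univ v), ksign_erase_ge K _ le_rfl, smul_eq_mul]
    linear_combination (X v * lowDiv K v (c Finset.univ)) * ksign_sq K v Finset.univ
  · have hne : (Tᶜ).Nonempty := by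
      rw [Finset.nonempty_iff_ne_empty]
      intro h
      exact hT (by simpa using h)
    obtain ⟨m, hm, hlt⟩ : ∃ m, m ∉ T ∧ ∀ v < m, v ∈ T := by
      refine ⟨(Tᶜ).min' hne, by simpa using Finset.min'_mem _ hne, fun v hv => ?_⟩
      by_contra h
      exact absurd (Finset.min'_le (Tᶜ) v (by simpa using h)) (not_le.2 hv)
    -- the term from the cycle condition
    have hD := congrArg (lowDiv K m) (hc (insert m T))
    rw [lowDiv_zero] at hD
    unfold kosz at hD
    rw [Finset.sum_insert hm, Finset.erase_insert hm, lowDiv_add, lowDiv_sum] at hD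
    have e1 : lowDiv K m ((ksign K m (insert m T) * X m) • c T)
        = ksign K m T * subLow K m.val (c T) := by
      rw [smul_eq_mul, mul_assoc, lowDiv_ksign, lowDiv_X_self]
      rw [← ksign_erase_ge K (insert m T) (le_refl m), Finset.erase_insert hm]
    rw [e1] at hD
    have e2 := sum_X_lowDiv K (c T) m.val m.isLt.le
    have e3 : ∑ v : Fin n with v.val < m.val, X v * lowDiv K v (c T)
        = ∑ v ∈ T, if v < m then X v * lowDiv K v (c T) else 0 := by
      rw [← Finset.sum_filter]
      refine Finset.sum_congr ?_ fun _ _ => rfl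
      ext v
      simp only [Finset.mem_filter, Finset.mem_univ, true_and]
      exact ⟨fun h => ⟨hlt v h, h⟩, fun h => h.2⟩
    have e4 : kosz K (khom K c) T =
        ∑ v ∈ T, ((if v < m then X v * lowDiv K v (c T) else 0) -
          ksign K m T * lowDiv K m ((ksign K v (insert m T) * X v) • c ((insert m T).erase v))) := by
      unfold kosz
      refine Finset.sum_congr rfl fun v hv => ?_
      have hvm : v ≠ m := fun h => hm (h ▸ hv)
      rcases lt_or_gt_of_ne hvm with h | h
      · rw [if_pos h, smul_eq_mul, smul_eq_mul, mul_assoc (ksign K v (insert m T)), lowDiv_ksign,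
          lowDiv_X_lt K h]
        rw [khom_of_min K c _ v (by simp) (fun w hw => by
          simp [hw.ne, hlt w (hw.trans h)]), Finset.insert_erase hv, ksign_erase_ge K _ le_rfl]
        linear_combination (X v * lowDiv K v (c T)) * ksign_sq K v T
      · rw [if_neg (not_lt.2 h.le), smul_eq_mul, smul_eq_mul, mul_assoc (ksign K v (insert m T)),
          lowDiv_ksign, lowDiv_X_gt K h]
        rw [khom_of_min K c _ m (by simp [hm]) (fun w hw => by
          simp [(hw.trans h).ne, hlt w hw]), ksign_erase_ge K _ h.le,
          Finset.erase_insert_of_ne hvm.symm]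
        have := ksign_erase_lt K (insert m T) (Finset.mem_insert_self m T) h
        rw [Finset.erase_insert hm] at this
        rw [this]
        ring
    rw [e4, Finset.sum_sub_distrib, ← e3, e2, ← Finset.mul_sum]
    linear_combination (-ksign K m T) * hD + (subLow K m.val (c T)) * ksign_sq K m T

theorem kosz_exact_pi {n b : ℕ} (c : Finset (Fin n) → Fin b → MvPolynomial (Fin n) K)
    (hc : ∀ T, kosz K c T = 0) (h0 : ∀ i, coeff 0 (c Finset.univ i) = 0) :
    ∃ y : Finset (Fin n) → Fin b → MvPolynomial (Fin n) K, ∀ T, kosz K y T = c T := by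
  refine ⟨fun T i => khom K (fun T => c T i) T, fun T => ?_⟩
  funext i
  have hp : ∀ (d : Finset (Fin n) → Fin b → MvPolynomial (Fin n) K) (T),
      kosz K (fun T => d T i) T = kosz K d T i := fun d T =>
    kosz_comm K (LinearMap.proj i : (Fin b → MvPolynomial (Fin n) K) →ₗ[_] _) d T
  rw [← hp]
  exact kosz_exact K (fun T => c T i) (fun T => by rw [hp, hc]; rfl) (h0 i) T

/-! ### Homogeneity -/

theorem homComp_mul {n : ℕ} (e : ℕ) (p g : MvPolynomial (Fin n) K) (hg : g.IsHomogeneous e) :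
    homogeneousComponent (1 + e) (p * g) = homogeneousComponent 1 p * g := by
  conv_lhs => rw [← sum_homogeneousComponent p]
  rw [Finset.sum_mul, map_sum]
  have : ∀ i, homogeneousComponent (1 + e) (homogeneousComponent i p * g) =
      if i = 1 then homogeneousComponent 1 p * g else 0 := by
    intro i
    have h1 : (homogeneousComponent i p * g).IsHomogeneous (i + e) :=
      (homogeneousComponent_isHomogeneous i p).mul hg
    rw [homogeneousComponent_of_mem h1]
    by_cases hi : i = 1
    · subst hi; simp
    · rw [if_neg hi, if_neg (by omega)]
  rw [Finset.sum_congr rfl (fun i _ => this i), Finset.sum_ite_eq']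
  split_ifs with h
  · rfl
  · rw [homogeneousComponent_eq_zero]
    · simp
    · simp at h; omega

theorem homComp_sum {n b : ℕ} (e : ℕ) (w g : Fin b → MvPolynomial (Fin n) K)
    (hg : ∀ j, (g j).IsHomogeneous e) (q : MvPolynomial (Fin n) K) (hq : q.IsHomogeneous (1 + e))
    (h : ∑ j, w j * g j = q) : ∑ j, homogeneousComponent 1 (w j) * g j = q := by
  have h2 := congrArg (homogeneousComponent (1 + e)) h
  rw [map_sum, homogeneousComponent_eq_self hq] at h2
  rw [← h2]
  exact Finset.sum_congr rfl fun j _ => (homComp_mul K e _ _ (hg j)).symm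

theorem kosz_hom {n : ℕ} (e : ℕ) (c : Finset (Fin n) → MvPolynomial (Fin n) K)
    (hc : ∀ T, (c T).IsHomogeneous e) (T : Finset (Fin n)) :
    (kosz K c T).IsHomogeneous (1 + e) := by
  refine IsHomogeneous.sum _ _ _ fun v _ => ?_
  rw [smul_eq_mul]
  refine IsHomogeneous.mul ?_ (hc _)
  have h1 : (ksign K v T).IsHomogeneous 0 := by
    have := (isHomogeneous_C (Fin n) ((-1 : K))).pow (T.filter (fun u => u < v)).card
    simpa [ksign] using this
  simpa using h1.mul (isHomogeneous_X K v)

theorem coeff_zero_of_hom {n e : ℕ} {p : MvPolynomial (Fin n) K} (hp : p.IsHomogeneous (e + 1)) :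
    coeff 0 p = 0 :=
  hp.coeff_eq_zero (by simp)

theorem coeff_zero_mul_hom {n e : ℕ} {p q : MvPolynomial (Fin n) K}
    (hp : p.IsHomogeneous (e + 1)) : coeff 0 (p * q) = 0 := by
  change constantCoeff (p * q) = 0
  rw [map_mul]
  have : constantCoeff p = 0 := coeff_zero_of_hom K hp
  rw [this, zero_mul]

/-! ### The main chase -/

theorem chase {n : ℕ} (b : ℕ → ℕ)
    (M : ∀ i : ℕ, Matrix (Fin (b i)) (Fin (b (i + 1))) (MvPolynomial (Fin n) K))
    (hM : ∀ i j l, ((M i) j l).IsHomogeneous 1)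
    (hex : ∀ (i : ℕ) (v : Fin (b (i + 1)) → MvPolynomial (Fin n) K),
      (M i).mulVec v = 0 ↔ ∃ w, (M (i + 1)).mulVec w = v) (k : ℕ) :
    ∀ (m : ℕ) (z : Finset (Fin n) → Fin (b m) → MvPolynomial (Fin n) K),
      (∀ T i, (z T i).IsHomogeneous 1) → (∀ T, T.card + k < n → z T = 0) →
      (∀ T, ∃ w, (M m).mulVec w = kosz K z T) →
      ∃ (y : Finset (Fin n) → Fin (b m) → MvPolynomial (Fin n) K)
        (w : Finset (Fin n) → Fin (b (m + 1)) → MvPolynomial (Fin n) K),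
        ∀ T, z T = kosz K y T + (M m).mulVec (w T) := by
  induction k with
  | zero =>
    intro m z hz hs hw
    have hD : ∀ T, kosz K z T = 0 := by
      intro T
      refine Finset.sum_eq_zero fun v hv => ?_
      rw [hs (T.erase v), smul_zero]
      have h1 := Finset.card_erase_lt_of_mem hv
      have h2 := Finset.card_le_univ T
      rw [Fintype.card_fin] at h2
      omega
    obtain ⟨y, hy⟩ := kosz_exact_pi K z hD (fun i => coeff_zero_of_hom K (e := 0) (hz _ i))
    exact ⟨y, fun _ => 0, fun T => by rw [hy, Matrix.mulVec_zero, add_zero]⟩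
  | succ k ih =>
    intro m z hz hs hw
    have hzero : ∀ T : Finset (Fin n), T.card + k < n → kosz K z T = 0 := by
      intro T hT
      refine Finset.sum_eq_zero fun v hv => ?_
      rw [hs (T.erase v), smul_zero]
      have h1 := Finset.card_erase_lt_of_mem hv
      omega
    have hDh : ∀ T i, (kosz K z T i).IsHomogeneous (1 + 1) := by
      intro T i
      rw [← show kosz K (fun T => z T i) T = kosz K z T i from
        kosz_comm K (LinearMap.proj i : (Fin (b m) → MvPolynomial (Fin n) K) →ₗ[_] _) z T]
      exact kosz_hom K 1 _ (fun T => hz T i) T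
    have hch : ∀ T, ∃ w : Fin (b (m + 1)) → MvPolynomial (Fin n) K,
        (M m).mulVec w = kosz K z T ∧ (∀ i, (w i).IsHomogeneous 1) ∧
        (T.card + k < n → w = 0) := by
      intro T
      by_cases hT : T.card + k < n
      · exact ⟨0, by rw [hzero T hT, Matrix.mulVec_zero],
          fun i => isHomogeneous_zero _ _ _, fun _ => rfl⟩
      · obtain ⟨w, hw⟩ := hw T
        refine ⟨fun i => homogeneousComponent 1 (w i), ?_,
          fun i => homogeneousComponent_isHomogeneous _ _, fun h => absurd h hT⟩
        funext i
        have h1 := congrFun hw i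
        simp only [Matrix.mulVec, dotProduct] at h1 ⊢
        have := homComp_sum K 1 w (fun j => M m i j) (hM m i) _ (hDh T i)
          (by rw [← h1]; exact Finset.sum_congr rfl fun j _ => mul_comm _ _)
        rw [← this]
        exact Finset.sum_congr rfl fun j _ => mul_comm _ _
    choose z' hz'1 hz'2 hz'3 using hch
    have hcm : ∀ (i : ℕ) (c : Finset (Fin n) → Fin (b (i + 1)) → MvPolynomial (Fin n) K) (T),
        kosz K (fun T => (M i).mulVec (c T)) T = (M i).mulVec (kosz K c T) := fun i c T =>
      kosz_comm K (M i).mulVecLin c T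
    have hw' : ∀ T, ∃ w, (M (m + 1)).mulVec w = kosz K z' T := by
      intro T
      rw [← hex, ← hcm]
      have : (fun T => (M m).mulVec (z' T)) = kosz K z := funext hz'1
      rw [this, kosz_kosz]
    obtain ⟨y', w', hyw⟩ := ih (m + 1) z' hz'2 hz'3 hw'
    have hMM : ∀ w, (M m).mulVec ((M (m + 1)).mulVec w) = 0 := fun w => (hex m _).2 ⟨w, rfl⟩
    obtain ⟨y, hy⟩ := kosz_exact_pi K (fun T => z T - (M m).mulVec (y' T))
      (fun T => by
        rw [kosz_sub, hcm, ← hz'1, hyw, Matrix.mulVec_add, hMM, add_zero, sub_self])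
      (fun i => by
        rw [Pi.sub_apply, coeff_sub, coeff_zero_of_hom K (e := 0) (hz _ i), zero_sub, neg_eq_zero]
        simp only [Matrix.mulVec, dotProduct, coeff_sum]
        exact Finset.sum_eq_zero fun j _ => coeff_zero_mul_hom K (e := 0) (hM m i j))
    exact ⟨y, y', fun T => by rw [hy]; simp⟩

theorem chase_top {n : ℕ} (I : Ideal (MvPolynomial (Fin n) K)) (hlin : HasLinearResolution K I 2)
    (z : Finset (Fin n) → MvPolynomial (Fin n) K) (hz : ∀ T, (z T).IsHomogeneous 2)
    (hI : ∀ T, kosz K z T ∈ I) :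
    ∃ y : Finset (Fin n) → MvPolynomial (Fin n) K, ∀ T, z T - kosz K y T ∈ I := by
  obtain ⟨b, g, M, hg, hspan, hM, hex0, hex⟩ := hlin
  let L : (Fin (b 0) → MvPolynomial (Fin n) K) →ₗ[MvPolynomial (Fin n) K] MvPolynomial (Fin n) K :=
    Fintype.linearCombination (MvPolynomial (Fin n) K) g
  have hL : ∀ v, L v = ∑ j, v j * g j := fun v => by
    simp [L, Fintype.linearCombination_apply]
  have hch : ∀ T, ∃ w : Fin (b 0) → MvPolynomial (Fin n) K,
      L w = kosz K z T ∧ ∀ i, (w i).IsHomogeneous 1 := by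
    intro T
    have h := hI T
    rw [← hspan, Ideal.span, Submodule.mem_span_range_iff_exists_fun] at h
    obtain ⟨w, hw⟩ := h
    refine ⟨fun i => homogeneousComponent 1 (w i), ?_,
      fun i => homogeneousComponent_isHomogeneous _ _⟩
    rw [hL]
    exact homComp_sum K 2 w g hg _ (kosz_hom K 2 z hz T) hw
  choose z1 hz1 hz1h using hch
  have hw' : ∀ T, ∃ w, (M 0).mulVec w = kosz K z1 T := by
    intro T
    rw [← hex0, ← hL, ← kosz_comm K L]
    have : (fun T => L (z1 T)) = kosz K z := funext hz1
    rw [this, kosz_kosz]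
  obtain ⟨y, w, hyw⟩ := chase K b M hM hex n 0 z1 hz1h (fun T hT => by omega) hw'
  have hMM : ∀ w, L ((M 0).mulVec w) = 0 := fun w => by rw [hL]; exact (hex0 _).2 ⟨w, rfl⟩
  have hy0 := kosz_exact K (fun T => z T - L (y T))
    (fun T => by rw [kosz_sub, kosz_comm K L, ← hz1, hyw, map_add, hMM, add_zero, sub_self])
    (by
      rw [coeff_sub, coeff_zero_of_hom K (e := 1) (hz _), zero_sub, neg_eq_zero, hL, coeff_sum]
      exact Finset.sum_eq_zero fun j _ => by
        rw [mul_comm]; exact coeff_zero_mul_hom K (e := 1) (hg j))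
  refine ⟨khom K (fun T => z T - L (y T)), fun T => ?_⟩
  rw [hy0 T, sub_sub_cancel, hL, ← hspan]
  exact Ideal.sum_mem _ fun j _ => Ideal.mul_mem_left _ _ (Ideal.subset_span ⟨j, rfl⟩)

/-! ### Vanishing of first cohomology of clique complexes -/

theorem coeff_edgeIdeal {n : ℕ} (G : SimpleGraph (Fin n)) {p : MvPolynomial (Fin n) K}
    (hp : p ∈ edgeIdeal K G) {a b : Fin n} (hab : ¬ G.Adj a b) :
    coeff (Finsupp.single a 1 + Finsupp.single b 1) p = 0 := by
  classical
  have hI : edgeIdeal K G = Ideal.span (Set.image (fun s => monomial s (1 : K))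
      {s | ∃ i j, G.Adj i j ∧ s = Finsupp.single i 1 + Finsupp.single j 1}) := by
    unfold edgeIdeal
    congr 1
    ext f
    constructor
    · rintro ⟨i, j, h, rfl⟩
      exact ⟨_, ⟨i, j, h, rfl⟩, by simp [X, monomial_mul]⟩
    · rintro ⟨_, ⟨i, j, h, rfl⟩, rfl⟩
      exact ⟨i, j, h, by simp [X, monomial_mul]⟩
  rw [hI, mem_ideal_span_monomial_image] at hp
  by_contra hc
  obtain ⟨_, ⟨i, j, hij, rfl⟩, hle⟩ := hp _ (mem_support_iff.2 hc)
  have h1 := hle i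
  have h2 := hle j
  have hne := hij.ne
  have hba : ¬ G.Adj b a := fun h => hab h.symm
  simp only [Finsupp.coe_add, Pi.add_apply, Finsupp.single_apply] at h1 h2
  have hi : a = i ∨ b = i := by
    by_contra h
    push Not at h
    simp [h.1, h.2] at h1
  have hj : a = j ∨ b = j := by
    by_contra h
    push Not at h
    simp [h.1, h.2] at h2
  rcases hi with rfl | rfl <;> rcases hj with rfl | rfl
  · exact hne rfl
  · exact hab hij
  · exact hba hij
  · exact hne rfl

/-- Scalar version of the sign. -/
def ksg {n : ℕ} (v : Fin n) (T : Finset (Fin n)) : K :=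
  (-1) ^ (T.filter (fun u => u < v)).card

theorem ksign_eq {n : ℕ} (v : Fin n) (T : Finset (Fin n)) : ksign K v T = C (ksg K v T) := by
  simp [ksign, ksg]

theorem ksg_sq {n : ℕ} (v : Fin n) (T : Finset (Fin n)) : ksg K v T * ksg K v T = 1 := by
  rw [ksg, ← pow_add, ← two_mul, pow_mul]; simp

theorem ksign_insert_ge {n : ℕ} {u v : Fin n} (T : Finset (Fin n)) (hu : u ∉ T) (h : v ≤ u) :
    ksign K v (insert u T) = ksign K v T := by
  rw [← ksign_erase_ge K (insert u T) h, Finset.erase_insert hu]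

theorem ksign_insert_lt {n : ℕ} {u v : Fin n} (T : Finset (Fin n)) (hu : u ∉ T) (h : u < v) :
    ksign K v (insert u T) = - ksign K v T := by
  have := ksign_erase_lt K (insert u T) (Finset.mem_insert_self u T) h
  rw [Finset.erase_insert hu] at this
  rw [this, neg_neg]

open Classical in
/-- The Koszul cochain attached to a one-cochain `φ` on `W`. -/
def zed {n : ℕ} (W : Finset (Fin n)) (φ : Fin n → Fin n → K) (T : Finset (Fin n)) :
    MvPolynomial (Fin n) K :=
  if h : ∃ p : Fin n × Fin n, p.1 < p.2 ∧ p.1 ∈ W ∧ p.2 ∈ W ∧ T = insert p.1 (insert p.2 Wᶜ) then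
    C (ksg K h.choose.1 Wᶜ * ksg K h.choose.2 Wᶜ * φ h.choose.1 h.choose.2) *
      (X h.choose.1 * X h.choose.2)
  else 0

theorem pair_unique {n : ℕ} (Q : Finset (Fin n)) {a b a' b' : Fin n} (hab : a < b) (hab' : a' < b')
    (ha : a ∉ Q) (hb : b ∉ Q) (h : insert a (insert b Q) = insert a' (insert b' Q)) :
    a = a' ∧ b = b' := by
  have h1 : a ∈ insert a' (insert b' Q) := h ▸ by simp
  have h2 : b ∈ insert a' (insert b' Q) := h ▸ by simp
  simp only [Finset.mem_insert, ha, hb, or_false] at h1 h2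
  rcases h1 with rfl | rfl <;> rcases h2 with rfl | rfl
  · exact absurd hab (lt_irrefl _)
  · exact ⟨rfl, rfl⟩
  · exact absurd hab (lt_asymm hab')
  · exact absurd hab (lt_irrefl _)

theorem zed_pair {n : ℕ} (W : Finset (Fin n)) (φ : Fin n → Fin n → K) {a b : Fin n} (hab : a < b)
    (ha : a ∈ W) (hb : b ∈ W) :
    zed K W φ (insert a (insert b Wᶜ)) =
      C (ksg K a Wᶜ * ksg K b Wᶜ * φ a b) * (X a * X b) := by
  have h : ∃ p : Fin n × Fin n, p.1 < p.2 ∧ p.1 ∈ W ∧ p.2 ∈ W ∧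
      insert a (insert b Wᶜ) = insert p.1 (insert p.2 Wᶜ) := ⟨(a, b), hab, ha, hb, rfl⟩
  have hs := h.choose_spec
  obtain ⟨h1, h2⟩ := pair_unique Wᶜ hab hs.1 (by simpa using ha) (by simpa using hb) hs.2.2.2
  rw [zed, dif_pos h, ← h1, ← h2]

theorem zed_hom {n : ℕ} (W : Finset (Fin n)) (φ : Fin n → Fin n → K) (T : Finset (Fin n)) :
    (zed K W φ T).IsHomogeneous 2 := by
  have aux : ∀ (r : K) (a b : Fin n), (C r * (X a * X b)).IsHomogeneous 2 := by
    intro r a b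
    have h := (isHomogeneous_C (Fin n) r).mul ((isHomogeneous_X K a).mul (isHomogeneous_X K b))
    rwa [zero_add] at h
  unfold zed
  split_ifs with h
  · exact aux _ _ _
  · exact isHomogeneous_zero _ _ _

theorem zed_exists {n : ℕ} (W : Finset (Fin n)) (φ : Fin n → Fin n → K) (T : Finset (Fin n))
    (h : zed K W φ T ≠ 0) :
    ∃ a b, a < b ∧ a ∈ W ∧ b ∈ W ∧ T = insert a (insert b Wᶜ) := by
  by_contra hc
  apply h
  rw [zed, dif_neg]
  rintro ⟨p, hp⟩
  exact hc ⟨_, _, hp⟩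

theorem edge_mul_mem {n : ℕ} (G : SimpleGraph (Fin n)) {a b : Fin n} (h : G.Adj a b)
    (p : MvPolynomial (Fin n) K) : X a * X b * p ∈ edgeIdeal K G :=
  Ideal.mul_mem_right _ _ (Ideal.subset_span ⟨a, b, h, rfl⟩)

theorem kosz_zed_triple {n : ℕ} (G : SimpleGraph (Fin n)) (W : Finset (Fin n))
    (φ : Fin n → Fin n → K)
    (hφ : ∀ a ∈ W, ∀ b ∈ W, ∀ c ∈ W, a < b → b < c → ¬ G.Adj a b → ¬ G.Adj b c → ¬ G.Adj a c →
      φ a b + φ b c = φ a c)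
    {a b c : Fin n} (ha : a ∈ W) (hb : b ∈ W) (hc : c ∈ W) (hab : a < b) (hbc : b < c) :
    kosz K (zed K W φ) (insert a (insert b (insert c Wᶜ))) ∈ edgeIdeal K G := by
  have hac := hab.trans hbc
  have na : a ∉ Wᶜ := by simpa using ha
  have nb : b ∉ Wᶜ := by simpa using hb
  have nc : c ∉ Wᶜ := by simpa using hc
  have nbc : b ∉ insert c Wᶜ := by simp [hb, hbc.ne]
  have nabc : a ∉ insert b (insert c Wᶜ) := by simp [ha, hab.ne, hac.ne]
  have key : kosz K (zed K W φ) (insert a (insert b (insert c Wᶜ))) =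
      C (ksg K a Wᶜ * ksg K b Wᶜ * ksg K c Wᶜ * (φ a b + φ b c - φ a c)) *
        (X a * X b * X c) := by
    unfold kosz
    rw [Finset.sum_insert nabc, Finset.sum_insert nbc, Finset.sum_insert nc, Finset.sum_eq_zero,
      add_zero]
    · have e1 : (insert a (insert b (insert c Wᶜ))).erase a = insert b (insert c Wᶜ) :=
        Finset.erase_insert nabc
      have e2 : (insert a (insert b (insert c Wᶜ))).erase b = insert a (insert c Wᶜ) := by
        rw [Finset.erase_insert_of_ne hab.ne, Finset.erase_insert nbc]
      have e3 : (insert a (insert b (insert c Wᶜ))).erase c = insert a (insert b Wᶜ) := by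
        rw [Finset.erase_insert_of_ne hac.ne, Finset.erase_insert_of_ne hbc.ne,
          Finset.erase_insert nc]
      rw [e1, e2, e3, zed_pair K W φ hab ha hb, zed_pair K W φ hac ha hc, zed_pair K W φ hbc hb hc]
      rw [ksign_insert_ge K _ nabc le_rfl, ksign_insert_ge K _ nbc hab.le,
        ksign_insert_ge K _ nc hac.le, ksign_insert_lt K _ nabc hab, ksign_insert_ge K _ nbc le_rfl,
        ksign_insert_ge K _ nc hbc.le, ksign_insert_lt K _ nabc hac, ksign_insert_lt K _ nbc hbc,
        ksign_insert_ge K _ nc le_rfl]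
      simp only [ksign_eq, smul_eq_mul, map_mul, map_add, map_sub]
      ring
    · intro v hv
      rw [show zed K W φ ((insert a (insert b (insert c Wᶜ))).erase v) = 0 from ?_, smul_zero]
      by_contra h
      obtain ⟨p, q, -, hp, hq, h⟩ := zed_exists K W φ _ h
      have : v ∈ (insert a (insert b (insert c Wᶜ))).erase v := by
        rw [h]; simp only [Finset.mem_insert]; exact Or.inr (Or.inr hv)
      simp at this
  have hmem : (X a * X b * X c : MvPolynomial (Fin n) K) ∈ edgeIdeal K G →
      kosz K (zed K W φ) (insert a (insert b (insert c Wᶜ))) ∈ edgeIdeal K G := fun h => by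
    rw [key]; exact Ideal.mul_mem_left _ _ h
  by_cases h1 : G.Adj a b
  · exact hmem (edge_mul_mem K G h1 _)
  by_cases h2 : G.Adj b c
  · apply hmem
    rw [show (X a * X b * X c : MvPolynomial (Fin n) K) = X b * X c * X a by ring]
    exact edge_mul_mem K G h2 _
  by_cases h3 : G.Adj a c
  · apply hmem
    rw [show (X a * X b * X c : MvPolynomial (Fin n) K) = X a * X c * X b by ring]
    exact edge_mul_mem K G h3 _
  rw [key, hφ a ha b hb c hc hab hbc h1 h2 h3]
  simp

theorem kosz_zed {n : ℕ} (G : SimpleGraph (Fin n)) (W : Finset (Fin n))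
    (φ : Fin n → Fin n → K)
    (hφ : ∀ a ∈ W, ∀ b ∈ W, ∀ c ∈ W, a < b → b < c → ¬ G.Adj a b → ¬ G.Adj b c → ¬ G.Adj a c →
      φ a b + φ b c = φ a c) (T : Finset (Fin n)) :
    kosz K (zed K W φ) T ∈ edgeIdeal K G := by
  by_cases hT : ∃ v ∈ T, zed K W φ (T.erase v) ≠ 0
  · obtain ⟨v, hv, hz⟩ := hT
    obtain ⟨a, b, hab, ha, hb, h⟩ := zed_exists K W φ _ hz
    have hnv : v ∉ insert a (insert b Wᶜ) := by rw [← h]; simp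
    have hTe : T = insert v (insert a (insert b Wᶜ)) := by rw [← h, Finset.insert_erase hv]
    simp only [Finset.mem_insert, Finset.mem_compl, not_or, not_not] at hnv
    obtain ⟨hva, hvb, hvW⟩ := hnv
    rcases lt_or_gt_of_ne hva with h1 | h1
    · rw [hTe]
      exact kosz_zed_triple K G W φ hφ hvW ha hb h1 hab
    · rcases lt_or_gt_of_ne hvb with h2 | h2
      · rw [hTe, Finset.insert_comm]
        exact kosz_zed_triple K G W φ hφ ha hvW hb h1 h2
      · rw [hTe, Finset.insert_comm, Finset.insert_comm v]
        exact kosz_zed_triple K G W φ hφ ha hb hvW hab h2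
  · push Not at hT
    unfold kosz
    rw [Finset.sum_eq_zero fun v hv => by rw [hT v hv, smul_zero]]
    exact Ideal.zero_mem _

theorem cohom_vanish {n : ℕ} (G : SimpleGraph (Fin n))
    (hlin : HasLinearResolution K (edgeIdeal K G) 2) (W : Finset (Fin n))
    (φ : Fin n → Fin n → K)
    (hφ : ∀ a ∈ W, ∀ b ∈ W, ∀ c ∈ W, a < b → b < c → ¬ G.Adj a b → ¬ G.Adj b c → ¬ G.Adj a c →
      φ a b + φ b c = φ a c) :
    ∃ f : Fin n → K, ∀ a ∈ W, ∀ b ∈ W, a < b → ¬ G.Adj a b → φ a b = f b - f a := by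
  classical
  obtain ⟨y, hy⟩ := chase_top K _ hlin (zed K W φ) (zed_hom K W φ) (kosz_zed K G W φ hφ)
  refine ⟨fun v => ksg K v Wᶜ * coeff (Finsupp.single v 1) (y (insert v Wᶜ)), ?_⟩
  intro a ha b hb hab hG
  change φ a b = ksg K b Wᶜ * coeff (Finsupp.single b 1) (y (insert b Wᶜ)) -
    ksg K a Wᶜ * coeff (Finsupp.single a 1) (y (insert a Wᶜ))
  have na : a ∉ Wᶜ := by simpa using ha
  have nb : b ∉ Wᶜ := by simpa using hb
  have nab : a ∉ insert b Wᶜ := by simp [ha, hab.ne]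
  have h := coeff_edgeIdeal K G (hy (insert a (insert b Wᶜ))) hG
  rw [coeff_sub, zed_pair K W φ hab ha hb, coeff_C_mul] at h
  unfold kosz at h
  rw [Finset.sum_insert nab, Finset.sum_insert nb, coeff_add, coeff_add, coeff_sum,
    Finset.sum_eq_zero, Finset.erase_insert nab, Finset.erase_insert_of_ne hab.ne,
    Finset.erase_insert nb, ksign_insert_ge K _ nab le_rfl, ksign_insert_ge K _ nb hab.le,
    ksign_insert_lt K _ nab hab, ksign_insert_ge K _ nb le_rfl] at h
  · have c1 : coeff (Finsupp.single a 1 + Finsupp.single b 1)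
        (X a * X b : MvPolynomial (Fin n) K) = 1 := by
      simp [X, monomial_mul]
    have c2 : ∀ q : MvPolynomial (Fin n) K,
        coeff (Finsupp.single a 1 + Finsupp.single b 1) (X a * q) = coeff (Finsupp.single b 1) q :=
      fun q => coeff_X_mul _ _ _
    have c3 : ∀ q : MvPolynomial (Fin n) K,
        coeff (Finsupp.single a 1 + Finsupp.single b 1) (X b * q) = coeff (Finsupp.single a 1) q :=
      fun q => by rw [add_comm]; exact coeff_X_mul _ _ _
    rw [c1, ksign_eq, ksign_eq, ← C_neg, smul_eq_mul, smul_eq_mul, mul_assoc (C _), mul_assoc (C _),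
      coeff_C_mul, coeff_C_mul, c2, c3] at h
    have sa := ksg_sq K a Wᶜ
    have sb := ksg_sq K b Wᶜ
    generalize ksg K a Wᶜ = p at *
    generalize ksg K b Wᶜ = q at *
    generalize coeff (Finsupp.single a 1) (y (insert a Wᶜ)) = u at *
    generalize coeff (Finsupp.single b 1) (y (insert b Wᶜ)) = w at *
    generalize φ a b = r at *
    linear_combination (p * q) * h - (r * q * q - q * w) * sa - (r - (-p * u)) * sb
  · intro v hv
    rw [smul_eq_mul, ksign_eq, mul_assoc, coeff_C_mul, coeff_X_mul', if_neg, mul_zero]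
    have hva : a ≠ v := fun h => na (h ▸ hv)
    have hvb : b ≠ v := fun h => nb (h ▸ hv)
    simp [hva, hvb]

/-! ### Simplicial vertices of the complement -/

theorem separator_adj {n : ℕ} (G : SimpleGraph (Fin n))
    (hlin : HasLinearResolution K (edgeIdeal K G) 2) (A : Finset (Fin n))
    (hconn : ∀ B ⊆ A, B.Nonempty → (∀ x ∈ B, ∀ y ∈ A, Gᶜ.Adj x y → y ∈ B) → B = A)
    (b s t : Fin n) (hbA : b ∉ A) (hb : ∀ x ∈ A, ¬ Gᶜ.Adj b x) (hsA : s ∉ A) (htA : t ∉ A)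
    (hsb : Gᶜ.Adj s b) (htb : Gᶜ.Adj t b) (hs : ∃ x ∈ A, Gᶜ.Adj s x) (ht : ∃ x ∈ A, Gᶜ.Adj t x)
    (hst : s ≠ t) : Gᶜ.Adj s t := by
  classical
  by_contra hnadj
  have hadj : ∀ u v, u ≠ v → (¬ G.Adj u v ↔ Gᶜ.Adj u v) := fun u v h => by
    simp [SimpleGraph.compl_adj, h]
  let φ : Fin n → Fin n → K := fun u v =>
    if u = s ∧ v ∈ A then 1 else if v = s ∧ u ∈ A then -1 else 0
  have hanti : ∀ u v, φ u v = - φ v u := by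
    intro u v
    simp only [φ]
    by_cases h1 : u = s ∧ v ∈ A
    · have h2 : ¬ (v = s ∧ u ∈ A) := fun h => hsA (h.1 ▸ h1.2)
      rw [if_pos h1, if_neg h2, if_pos h1, neg_neg]
    · by_cases h2 : v = s ∧ u ∈ A
      · rw [if_neg h1, if_pos h2, if_pos h2]
      · rw [if_neg h1, if_neg h2, if_neg h2, if_neg h1, neg_zero]
  let W : Finset (Fin n) := insert b (insert s (insert t A))
  have hW : ∀ v, v ∈ W → v = b ∨ v = s ∨ v = t ∨ v ∈ A := fun v hv => by
    simpa [W] using hv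
  have hsbn := hsb.ne
  -- neighbours of `s` within `W` adjacent to each other
  have hs2 : ∀ u ∈ W, ∀ v ∈ W, Gᶜ.Adj s u → Gᶜ.Adj s v → Gᶜ.Adj u v → (u ∈ A ↔ v ∈ A) := by
    intro u hu v hv h1 h2 h3
    rcases hW u hu with rfl | rfl | rfl | hu'
    · rcases hW v hv with rfl | rfl | rfl | hv'
      · rfl
      · exact absurd h2 (SimpleGraph.irrefl _)
      · exact absurd h2 hnadj
      · exact absurd h3 (hb v hv')
    · exact absurd h1 (SimpleGraph.irrefl _)
    · exact absurd h1 hnadj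
    · rcases hW v hv with rfl | rfl | rfl | hv'
      · exact absurd h3.symm (hb u hu')
      · exact absurd h2 (SimpleGraph.irrefl _)
      · exact absurd h2 hnadj
      · exact ⟨fun _ => hv', fun _ => hu'⟩
  obtain ⟨f, hf⟩ := cohom_vanish K G hlin W φ (by
    intro u hu v hv w hw huv hvw h1 h2 h3
    have huw := huv.trans hvw
    rw [hadj _ _ huv.ne] at h1
    rw [hadj _ _ hvw.ne] at h2
    rw [hadj _ _ huw.ne] at h3
    simp only [φ]
    by_cases eu : u = s
    · subst eu
      have := hs2 v hv w hw h1 h3 h2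
      simp [this, huv.ne', huw.ne', hsA]
    · by_cases ev : v = s
      · subst ev
        have := hs2 u hu w hw h1.symm h2 h3
        simp [this, huv.ne, hvw.ne', hsA]
        split_ifs <;> simp
      · by_cases ew : w = s
        · subst ew
          have := hs2 u hu v hv h3.symm h2.symm h1
          simp [this, hsA, eu, ev]
        · simp [eu, ev, ew])
  have hf' : ∀ u ∈ W, ∀ v ∈ W, Gᶜ.Adj u v → φ u v = f v - f u := by
    intro u hu v hv h
    rcases lt_or_gt_of_ne h.ne with h1 | h1
    · exact hf u hu v hv h1 ((hadj _ _ h.ne).2 h)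
    · rw [hanti, hf v hv u hu h1 ((hadj _ _ h.ne').2 h.symm)]; ring
  have mb : b ∈ W := by simp [W]
  have ms : s ∈ W := by simp [W]
  have mt : t ∈ W := by simp [W]
  have mA : ∀ x ∈ A, x ∈ W := fun x hx => by simp [W, hx]
  obtain ⟨x, hx, hsx⟩ := hs
  obtain ⟨x', hx', htx⟩ := ht
  have e1 := hf' s ms b mb hsb
  have e2 := hf' t mt b mb htb
  have e3 := hf' s ms x (mA x hx) hsx
  have e4 := hf' t mt x' (mA x' hx') htx
  have e5 : f x = f x' := by
    have := hconn (A.filter (fun v => f v = f x')) (Finset.filter_subset _ _) ⟨x', by simp [hx']⟩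
      (by
        intro p hp q hq hpq
        rw [Finset.mem_filter] at hp ⊢
        refine ⟨hq, ?_⟩
        have h := hf' p (mA p hp.1) q (mA q hq) hpq
        have h0 : φ p q = 0 := by
          have h1 : p ≠ s := fun h => hsA (h ▸ hp.1)
          have h2 : q ≠ s := fun h => hsA (h ▸ hq)
          simp [φ, h1, h2]
        rw [h0] at h
        rw [← hp.2]; linear_combination -h)
    have hm : x ∈ A.filter (fun v => f v = f x') := by
      rw [this]; exact hx
    exact (Finset.mem_filter.1 hm).2
  have f1 : φ s b = 0 := by simp [φ, hbA, hsA]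
  have f2 : φ t b = 0 := by simp [φ, hbA, hsbn.symm]
  have f3 : φ s x = 1 := by simp [φ, hx]
  have hx's : x' ≠ s := fun h => hsA (h ▸ hx')
  have f4 : φ t x' = 0 := by simp [φ, hst.symm, hx's]
  rw [f1] at e1
  rw [f2] at e2
  rw [f3] at e3
  rw [f4] at e4
  exact one_ne_zero (α := K) (by linear_combination e3 - e1 + e2 - e4 + e5)

theorem exists_simplicial {n : ℕ} (H : SimpleGraph (Fin n))
    (hsep : ∀ A : Finset (Fin n),
      (∀ B ⊆ A, B.Nonempty → (∀ x ∈ B, ∀ y ∈ A, H.Adj x y → y ∈ B) → B = A) →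
      ∀ b s t : Fin n, b ∉ A → (∀ x ∈ A, ¬ H.Adj b x) → s ∉ A → t ∉ A →
      H.Adj s b → H.Adj t b → (∃ x ∈ A, H.Adj s x) → (∃ x ∈ A, H.Adj t x) → s ≠ t → H.Adj s t)
    (U : Finset (Fin n)) :
    ∀ b ∈ U, (∃ c ∈ U, c ≠ b ∧ ¬ H.Adj b c) →
      ∃ a ∈ U, a ≠ b ∧ ¬ H.Adj b a ∧
        ∀ x ∈ U, ∀ y ∈ U, H.Adj a x → H.Adj a y → x ≠ y → H.Adj x y := by
  classical
  induction U using Finset.strongInduction with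
  | H U ih =>
    intro b hbU hc
    let Z := U.filter (fun c => c ≠ b ∧ ¬ H.Adj b c)
    have hZ : ∀ c, c ∈ Z ↔ c ∈ U ∧ c ≠ b ∧ ¬ H.Adj b c := fun c => by simp [Z]
    have hZne : Z.Nonempty := by
      obtain ⟨c, h1, h2⟩ := hc
      exact ⟨c, (hZ c).2 ⟨h1, h2⟩⟩
    let P := Z.powerset.filter (fun A => A.Nonempty ∧ ∀ x ∈ A, ∀ y ∈ Z, H.Adj x y → y ∈ A)
    have hP : ∀ A, A ∈ P ↔ A ⊆ Z ∧ A.Nonempty ∧ ∀ x ∈ A, ∀ y ∈ Z, H.Adj x y → y ∈ A :=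
      fun A => by simp [P]
    obtain ⟨A, hA, hmin⟩ := Finset.exists_min_image P Finset.card
      ⟨Z, (hP Z).2 ⟨subset_rfl, hZne, fun _ _ y hy _ => hy⟩⟩
    obtain ⟨hAZ, ⟨a0, ha0⟩, hAcl⟩ := (hP A).1 hA
    have hconn : ∀ B ⊆ A, B.Nonempty → (∀ x ∈ B, ∀ y ∈ A, H.Adj x y → y ∈ B) → B = A := by
      intro B hBA hB hcl
      refine Finset.eq_of_subset_of_card_le hBA (hmin B ((hP B).2 ⟨hBA.trans hAZ, hB, ?_⟩))
      intro x hx y hy hxy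
      exact hcl x hx y (hAcl x (hBA hx) y hy hxy) hxy
    let S := U.filter (fun s => s ∉ A ∧ ∃ x ∈ A, H.Adj s x)
    have hS : ∀ s, s ∈ S ↔ s ∈ U ∧ s ∉ A ∧ ∃ x ∈ A, H.Adj s x := fun s => by simp [S]
    have hbA : b ∉ A := fun h => ((hZ b).1 (hAZ h)).2.1 rfl
    have hbnA : ∀ x ∈ A, ¬ H.Adj b x := fun x hx => ((hZ x).1 (hAZ hx)).2.2
    have hSb : ∀ s ∈ S, H.Adj s b := by
      intro s hs
      obtain ⟨h1, h2, x, hx, hsx⟩ := (hS s).1 hs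
      by_contra hn
      have hsb : s ≠ b := by
        rintro rfl
        exact hbnA x hx hsx
      exact h2 (hAcl x hx s ((hZ s).2 ⟨h1, hsb, fun h => hn h.symm⟩) hsx.symm)
    have hSc : ∀ s ∈ S, ∀ t ∈ S, s ≠ t → H.Adj s t := by
      intro s hs t ht hst
      have h1 := (hS s).1 hs
      have h2 := (hS t).1 ht
      exact hsep A hconn b s t hbA hbnA h1.2.1 h2.2.1 (hSb s hs) (hSb t ht) h1.2.2 h2.2.2 hst
    have hU' : A ∪ S ⊂ U := by
      refine Finset.ssubset_iff_subset_ne.2 ⟨?_, ?_⟩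
      · intro x hx
        rcases Finset.mem_union.1 hx with h | h
        · exact ((hZ x).1 (hAZ h)).1
        · exact ((hS x).1 h).1
      · intro h
        have : b ∈ A ∪ S := h ▸ hbU
        rcases Finset.mem_union.1 this with h | h
        · exact hbA h
        · exact (SimpleGraph.irrefl _) (hSb b h)
    -- it suffices to find a simplicial vertex of `A ∪ S` in `A`
    suffices hsuff : ∃ a ∈ A, ∀ x ∈ A ∪ S, ∀ y ∈ A ∪ S, H.Adj a x → H.Adj a y → x ≠ y →
        H.Adj x y by
      obtain ⟨a, ha, hsim⟩ := hsuff
      have h1 := (hZ a).1 (hAZ ha)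
      refine ⟨a, h1.1, h1.2.1, h1.2.2, ?_⟩
      have hin : ∀ x ∈ U, H.Adj a x → x ∈ A ∪ S := by
        intro x hx hax
        by_cases hxA : x ∈ A
        · exact Finset.mem_union_left _ hxA
        · exact Finset.mem_union_right _ ((hS x).2 ⟨hx, hxA, a, ha, hax.symm⟩)
      intro x hx y hy hax hay hxy
      exact hsim x (hin x hx hax) y (hin y hy hay) hax hay hxy
    by_cases hdom : ∃ s ∈ S, ∃ c ∈ A ∪ S, c ≠ s ∧ ¬ H.Adj s c
    · obtain ⟨s, hs, hc⟩ := hdom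
      obtain ⟨a, ha, has, hna, hsim⟩ := ih _ hU' s (Finset.mem_union_right _ hs) hc
      refine ⟨a, ?_, hsim⟩
      rcases Finset.mem_union.1 ha with h | h
      · exact h
      · exact absurd (hSc s hs a h has.symm) hna
    · push Not at hdom
      by_cases hcl : ∃ p ∈ A, ∃ c ∈ A ∪ S, c ≠ p ∧ ¬ H.Adj p c
      · obtain ⟨p, hp, hc⟩ := hcl
        obtain ⟨a, ha, hap, hna, hsim⟩ := ih _ hU' p (Finset.mem_union_left _ hp) hc
        refine ⟨a, ?_, hsim⟩
        rcases Finset.mem_union.1 ha with h | h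
        · exact h
        · exact absurd (hdom a h p (Finset.mem_union_left _ hp) hap.symm).symm hna
      · push Not at hcl
        refine ⟨a0, ha0, fun x hx y hy _ _ hxy => ?_⟩
        rcases Finset.mem_union.1 hx with h | h
        · exact hcl x h y hy hxy.symm
        · exact hdom x h y hy hxy.symm

/-! ### The v-number -/

open Classical in
/-- Substitute zero for all neighbours of `v`. -/
def killNbr {n : ℕ} (G : SimpleGraph (Fin n)) (v : Fin n) :
    MvPolynomial (Fin n) K →ₐ[K] MvPolynomial (Fin n) K :=
  aeval (fun u => if G.Adj v u then 0 else X u)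

theorem killNbr_X {n : ℕ} (G : SimpleGraph (Fin n)) (v u : Fin n) (h : ¬ G.Adj v u) :
    killNbr K G v (X u) = X u := by
  simp [killNbr, h]

theorem killNbr_X_adj {n : ℕ} (G : SimpleGraph (Fin n)) (v u : Fin n) (h : G.Adj v u) :
    killNbr K G v (X u) = 0 := by
  simp [killNbr, h]

theorem sub_killNbr {n : ℕ} (G : SimpleGraph (Fin n)) (v : Fin n) (p : MvPolynomial (Fin n) K) :
    (p - killNbr K G v p) * X v ∈ edgeIdeal K G := by
  induction p using MvPolynomial.induction_on with
  | C a => simp [killNbr]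
  | add p q hp hq =>
    rw [map_add, show ∀ a b c d x : MvPolynomial (Fin n) K,
      (a + b - (c + d)) * x = (a - c) * x + (b - d) * x by intros; ring]
    exact Ideal.add_mem _ hp hq
  | mul_X p u hp =>
    by_cases h : G.Adj v u
    · rw [map_mul, killNbr_X_adj K G v u h, mul_zero, sub_zero,
        show p * X u * X v = X v * X u * p by ring]
      exact edge_mul_mem K G h p
    · rw [map_mul, killNbr_X K G v u h, show ∀ q : MvPolynomial (Fin n) K,
        (p * X u - q * X u) * X v = X u * ((p - q) * X v) by intros; ring]
      exact Ideal.mul_mem_left _ _ hp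

theorem edgeIdeal_le_ker {n : ℕ} (G : SimpleGraph (Fin n)) (v : Fin n)
    (hv : ∀ i j, G.Adj i j → G.Adj v i ∨ G.Adj v j) :
    edgeIdeal K G ≤ RingHom.ker (killNbr K G v) := by
  unfold edgeIdeal
  rw [Ideal.span_le]
  rintro f ⟨i, j, hij, rfl⟩
  rw [SetLike.mem_coe, RingHom.mem_ker, map_mul]
  rcases hv i j hij with h | h
  · rw [killNbr_X_adj K G v i h, zero_mul]
  · rw [killNbr_X_adj K G v j h, mul_zero]

theorem colon_eq_ker {n : ℕ} (G : SimpleGraph (Fin n)) (v : Fin n)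
    (hv : ∀ i j, G.Adj i j → G.Adj v i ∨ G.Adj v j) (f : MvPolynomial (Fin n) K) :
    f * X v ∈ edgeIdeal K G ↔ f ∈ RingHom.ker (killNbr K G v) := by
  constructor
  · intro h
    have h1 := edgeIdeal_le_ker K G v hv h
    rw [RingHom.mem_ker, map_mul, killNbr_X K G v v (SimpleGraph.irrefl _)] at h1
    rw [RingHom.mem_ker]
    exact (mul_eq_zero.1 h1).resolve_right (X_ne_zero v)
  · intro h
    have h1 := sub_killNbr K G v f
    rw [RingHom.mem_ker] at h
    rwa [h, sub_zero] at h1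

theorem edgeIdeal_not_prime {n : ℕ} (G : SimpleGraph (Fin n)) {i j : Fin n} (hij : G.Adj i j) :
    ¬ (edgeIdeal K G).IsPrime := by
  intro hp
  have hX : ∀ u, (X u : MvPolynomial (Fin n) K) ∉ edgeIdeal K G := by
    intro u hu
    let e : MvPolynomial (Fin n) K →ₐ[K] MvPolynomial (Fin n) K :=
      aeval (fun w => if w = u then X u else 0)
    have hle : edgeIdeal K G ≤ RingHom.ker e := by
      unfold edgeIdeal
      rw [Ideal.span_le]
      rintro f ⟨i, j, hij, rfl⟩
      rw [SetLike.mem_coe, RingHom.mem_ker, map_mul]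
      by_cases hi : i = u
      · have hj : j ≠ u := fun h => hij.ne (hi.trans h.symm)
        simp [e, hj]
      · simp [e, hi]
    have h1 := hle hu
    rw [RingHom.mem_ker] at h1
    simp [e] at h1
  have hm : (X i * X j : MvPolynomial (Fin n) K) ∈ edgeIdeal K G :=
    Ideal.subset_span ⟨i, j, hij, rfl⟩
  rcases hp.mem_or_mem hm with h | h
  · exact hX _ h
  · exact hX _ h

/-- If the edge ideal `I(G)` has a linear resolution, then `v(I(G)) = 1`. -/
theorem stmt13 {n : ℕ} (G : SimpleGraph (Fin n)) (he : G.edgeSet.Nonempty)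
    (hlin : HasLinearResolution K (edgeIdeal K G) 2) :
    vNumber K (edgeIdeal K G) = 1 := by
  obtain ⟨i, j, hij⟩ : ∃ i j, G.Adj i j := by
    obtain ⟨e, he⟩ := he
    induction e using Sym2.ind with
    | _ i j => exact ⟨i, j, he⟩
  obtain ⟨v, -, -, -, hsim⟩ := exists_simplicial Gᶜ (fun A => separator_adj K G hlin A)
    Finset.univ i (Finset.mem_univ i) ⟨j, Finset.mem_univ j, hij.ne', by simp [hij]⟩
  have hv : ∀ i j, G.Adj i j → G.Adj v i ∨ G.Adj v j := by
    intro i j hij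
    by_contra hc
    push Not at hc
    have hvi : v ≠ i := by rintro rfl; exact hc.2 hij
    have hvj : v ≠ j := by rintro rfl; exact hc.1 hij.symm
    have := hsim i (Finset.mem_univ i) j (Finset.mem_univ j)
      ((SimpleGraph.compl_adj _ _ _).2 ⟨hvi, hc.1⟩) ((SimpleGraph.compl_adj _ _ _).2 ⟨hvj, hc.2⟩)
      hij.ne
    exact ((SimpleGraph.compl_adj _ _ _).1 this).2 hij
  have hprime : (RingHom.ker (killNbr K G v)).IsPrime := RingHom.ker_isPrime _
  have h1 : (1 : ℕ) ∈ {d | ∃ f : MvPolynomial (Fin n) K, f.IsHomogeneous d ∧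
      (edgeIdeal K G).colon (Ideal.span {f}) ∈ assPrimes K (edgeIdeal K G)} := by
    refine ⟨X v, isHomogeneous_X K v, ?_⟩
    have hcol : (edgeIdeal K G).colon (Ideal.span {(X v : MvPolynomial (Fin n) K)}) =
        RingHom.ker (killNbr K G v) := by
      ext f
      rw [Ideal.mem_colon_span_singleton]
      exact colon_eq_ker K G v hv f
    rw [hcol]
    refine ⟨hprime, Ideal.Quotient.mk _ (X v), ?_⟩
    have : Submodule.colon (⊥ : Submodule (MvPolynomial (Fin n) K)
        (MvPolynomial (Fin n) K ⧸ edgeIdeal K G)) {Ideal.Quotient.mk _ (X v)} =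
        RingHom.ker (killNbr K G v) := by
      ext f
      rw [Submodule.mem_colon_singleton, Submodule.mem_bot, ← colon_eq_ker K G v hv f,
        ← Ideal.Quotient.eq_zero_iff_mem, map_mul]
      rfl
    rw [this, hprime.radical]
  have h0 : (0 : ℕ) ∉ {d | ∃ f : MvPolynomial (Fin n) K, f.IsHomogeneous d ∧
      (edgeIdeal K G).colon (Ideal.span {f}) ∈ assPrimes K (edgeIdeal K G)} := by
    rintro ⟨f, hf, hass⟩
    have hp : ((edgeIdeal K G).colon (Ideal.span {f})).IsPrime := hass.1
    have hfC : f = C (coeff 0 f) := by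
      conv_lhs => rw [← homogeneousComponent_eq_self hf]
      exact homogeneousComponent_zero f
    by_cases hc : coeff 0 f = 0
    · rw [hc, C_0] at hfC
      apply hp.ne_top
      rw [Ideal.eq_top_iff_one, Ideal.mem_colon_span_singleton, hfC, mul_zero]
      exact Ideal.zero_mem _
    · have hu : IsUnit f := by
        rw [hfC]
        exact (IsUnit.mk0 _ hc).map C
      have : (edgeIdeal K G).colon (Ideal.span {f}) = edgeIdeal K G := by
        ext p
        rw [Ideal.mem_colon_span_singleton]
        exact Ideal.mul_unit_mem_iff_mem _ hu
      rw [this] at hp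
      exact edgeIdeal_not_prime K G hij hp
  unfold vNumber
  apply le_antisymm
  · exact Nat.sInf_le h1
  · rw [Nat.one_le_iff_ne_zero]
    intro h
    have := Nat.sInf_mem ⟨1, h1⟩
    rw [h] at this
    exact h0 this

end
end

section
/- Let I ⊂ S be a polymatroidal ideal. Then v(I^k) = α(I)·k − 1 for all k ≥ 1. -/
open MvPolynomial

noncomputable section

variable (K : Type*) [Field K]

/-- The monomial with exponent vector `m`. -/
def mon {σ : Type*} (m : σ →₀ ℕ) : MvPolynomial σ K := monomial m 1

/-- The degree of an exponent vector. -/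
def mdeg {σ : Type*} (m : σ →₀ ℕ) : ℕ := m.sum fun _ e => e

/-- `U` is the minimal monomial generating set `G(I)` of the monomial ideal `I`. -/
def MinimalGens {σ : Type*} [DecidableEq σ] (I : Ideal (MvPolynomial σ K))
    (U : Finset (σ →₀ ℕ)) : Prop :=
  I = Ideal.span (mon K '' (U : Set (σ →₀ ℕ))) ∧
    ∀ m ∈ U, mon K m ∉ Ideal.span (mon K '' ((U.erase m : Finset (σ →₀ ℕ)) : Set (σ →₀ ℕ)))

/-- A polymatroidal ideal: a monomial ideal generated in a single degree whose minimal
generators satisfy the exchange property. -/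
def IsPolymatroidal {n : ℕ} (I : Ideal (MvPolynomial (Fin n) K)) : Prop :=
  ∃ (U : Finset (Fin n →₀ ℕ)) (d : ℕ), MinimalGens K I U ∧ (∀ m ∈ U, mdeg m = d) ∧
    ∀ u ∈ U, ∀ v ∈ U, ∀ i, v i < u i →
      ∃ j, u j < v j ∧ (u - Finsupp.single i 1 + Finsupp.single j 1) ∈ U

/-- The exchange property of a set of exponent vectors. -/
def Exch {n : ℕ} (U : Finset (Fin n →₀ ℕ)) : Prop :=
  ∀ u ∈ U, ∀ v ∈ U, ∀ i, v i < u i →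
      ∃ j, u j < v j ∧ (u - Finsupp.single i 1 + Finsupp.single j 1) ∈ U

lemma swap_apply {n : ℕ} (u : Fin n →₀ ℕ) (i j l : Fin n) :
    (u - Finsupp.single i 1 + Finsupp.single j 1 : Fin n →₀ ℕ) l =
      u l - (if i = l then 1 else 0) + (if j = l then 1 else 0) := by
  simp [Finsupp.single_apply]

lemma exch_trans {n : ℕ} {U : Finset (Fin n →₀ ℕ)} (hU : Exch U) {u : Fin n →₀ ℕ} (hu : u ∈ U)
    {i a j : Fin n} (hi : 0 < u i) (ha : 0 < u a) (hja : j ≠ a)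
    (hx : (u - Finsupp.single i 1 + Finsupp.single a 1) ∈ U)
    (hy : (u - Finsupp.single a 1 + Finsupp.single j 1) ∈ U) :
    (u - Finsupp.single i 1 + Finsupp.single j 1) ∈ U := by
  by_cases hai : a = i
  · subst hai; exact hy
  by_cases hji : j = i
  · subst hji
    convert hu using 1
    ext l
    rw [swap_apply]
    split_ifs with h
    · subst h; omega
    · omega
  obtain ⟨b, hb, hb'⟩ := hU _ hy _ hx i (by
    rw [swap_apply, swap_apply]; simp [hai, hji]; omega)
  have hba : b = a := by
    by_contra hne
    rw [swap_apply, swap_apply] at hb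
    have h2 : a ≠ b := fun h => hne h.symm
    simp only [h2, if_false] at hb
    split_ifs at hb <;> omega
  subst hba
  convert hb' using 1
  ext l
  rw [swap_apply, swap_apply, swap_apply]
  by_cases h1 : i = l
  · subst h1; simp [hai, hji]
  · by_cases h2 : b = l
    · subst h2; simp [hja, h1]; omega
    · simp [h1, h2]

/-- The exchangeable positions form a set on which `u` is minimal. -/
lemma key_min {n : ℕ} {U : Finset (Fin n →₀ ℕ)} (hU : Exch U) {u : Fin n →₀ ℕ} (hu : u ∈ U)
    {i : Fin n} (hi : 0 < u i) (A : Finset (Fin n))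
    (hA : ∀ j, j ∈ A ↔ (u - Finsupp.single i 1 + Finsupp.single j 1) ∈ U) :
    ∀ N : ℕ, ∀ v ∈ U, ∑ j, (v j - u j) ≤ N → ∑ j ∈ A, u j ≤ ∑ j ∈ A, v j := by
  intro N
  induction N with
  | zero =>
    intro v hv hN
    by_contra hlt
    push Not at hlt
    obtain ⟨a, haA, hav⟩ := Finset.exists_lt_of_sum_lt hlt
    obtain ⟨j, hj, -⟩ := hU u hu v hv a hav
    have := Finset.sum_eq_zero_iff.1 (Nat.le_zero.1 hN) j (Finset.mem_univ _)
    omega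
  | succ N ih =>
    intro v hv hN
    by_contra hlt
    push Not at hlt
    obtain ⟨a, haA, hav⟩ := Finset.exists_lt_of_sum_lt hlt
    obtain ⟨j, hj, hjU⟩ := hU u hu v hv a hav
    have hjA : j ∈ A := (hA j).2 (exch_trans hU hu hi (by omega)
      (by rintro rfl; omega) ((hA a).1 haA) hjU)
    obtain ⟨b, hb, hbU⟩ := hU v hv u hu j hj
    have hjb : j ≠ b := by rintro rfl; omega
    have h1 := ih _ hbU (by
      have : ∑ l, ((v - Finsupp.single j 1 + Finsupp.single b 1 : Fin n →₀ ℕ) l - u l)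
          < ∑ l, (v l - u l) := by
        apply Finset.sum_lt_sum
        · intro l _
          rw [swap_apply]
          by_cases h : b = l
          · subst h; simp [hjb]; omega
          · simp [h]; split_ifs <;> omega
        · refine ⟨j, Finset.mem_univ _, ?_⟩
          rw [swap_apply]; simp [hjb.symm]; omega
      omega)
    have h2 : ∑ l ∈ A, (v - Finsupp.single j 1 + Finsupp.single b 1 : Fin n →₀ ℕ) l
        ≤ ∑ l ∈ A, v l := by
      have e1 : ∑ l ∈ A, ((v - Finsupp.single j 1 + Finsupp.single b 1 : Fin n →₀ ℕ) l
          + (if j = l then 1 else 0)) = ∑ l ∈ A, (v l + (if b = l then 1 else 0)) := by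
        apply Finset.sum_congr rfl
        intro l _
        rw [swap_apply]
        by_cases h : j = l
        · subst h; simp; omega
        · simp [h]
      rw [Finset.sum_add_distrib, Finset.sum_add_distrib, Finset.sum_ite_eq, Finset.sum_ite_eq,
        if_pos hjA] at e1
      split_ifs at e1 <;> omega
    omega

/-- The `k`-fold sumset. -/
def sumset {n : ℕ} (U : Finset (Fin n →₀ ℕ)) : ℕ → Set (Fin n →₀ ℕ)
  | 0 => {0}
  | k + 1 => {m | ∃ a ∈ sumset U k, ∃ b ∈ U, m = a + b}

lemma nsmul_mem_sumset {n : ℕ} {U : Finset (Fin n →₀ ℕ)} {u : Fin n →₀ ℕ} (hu : u ∈ U) (k : ℕ) :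
    k • u ∈ sumset U k := by
  induction k with
  | zero => simp [sumset]
  | succ k ih => exact ⟨_, ih, u, hu, succ_nsmul u k⟩

lemma sumset_degree {n : ℕ} {U : Finset (Fin n →₀ ℕ)} {d : ℕ} (hd : ∀ m ∈ U, m.degree = d)
    (k : ℕ) : ∀ m ∈ sumset U k, m.degree = d * k := by
  induction k with
  | zero => intro m hm; simp only [sumset, Set.mem_singleton_iff] at hm; subst hm; simp
  | succ k ih =>
    rintro m ⟨a, ha, b, hb, rfl⟩
    rw [map_add, ih a ha, hd b hb]; ring

lemma sumset_min {n : ℕ} {U : Finset (Fin n →₀ ℕ)} {A : Finset (Fin n)} {c : ℕ}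
    (hc : ∀ v ∈ U, c ≤ ∑ j ∈ A, v j) (k : ℕ) : ∀ m ∈ sumset U k, k * c ≤ ∑ j ∈ A, m j := by
  induction k with
  | zero => intro m _; simp
  | succ k ih =>
    rintro m ⟨a, ha, b, hb, rfl⟩
    have := ih a ha
    have := hc b hb
    simp only [Finsupp.add_apply, Finset.sum_add_distrib]
    nlinarith

lemma pow_eq_span {n : ℕ} (U : Finset (Fin n →₀ ℕ)) (k : ℕ) :
    Ideal.span (mon K '' (U : Set (Fin n →₀ ℕ))) ^ k = Ideal.span (mon K '' sumset U k) := by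
  induction k with
  | zero =>
    simp [sumset, mon]
  | succ k ih =>
    rw [pow_succ, ih, Ideal.span_mul_span']
    congr 1
    ext f
    constructor
    · rintro ⟨_, ⟨a, ha, rfl⟩, _, ⟨b, hb, rfl⟩, rfl⟩
      exact ⟨a + b, ⟨a, ha, b, hb, rfl⟩, by simp [mon, monomial_mul]⟩
    · rintro ⟨_, ⟨a, ha, b, hb, rfl⟩, rfl⟩
      exact ⟨_, ⟨a, ha, rfl⟩, _, ⟨b, hb, rfl⟩, by simp [mon, monomial_mul]⟩

lemma mem_span_mon {n : ℕ} (T : Set (Fin n →₀ ℕ)) (f : MvPolynomial (Fin n) K) :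
    f ∈ Ideal.span (mon K '' T) ↔ ∀ m ∈ f.support, ∃ t ∈ T, t ≤ m :=
  mem_ideal_span_monomial_image

lemma mdeg_eq {n : ℕ} (m : Fin n →₀ ℕ) : mdeg m = m.degree := rfl

lemma span_mon_degree_le {n : ℕ} {T : Set (Fin n →₀ ℕ)} {D : ℕ} (hT : ∀ m ∈ T, m.degree = D)
    {f : MvPolynomial (Fin n) K} (hf : f ∈ Ideal.span (mon K '' T)) (h0 : f ≠ 0) {e : ℕ}
    (he : f.IsHomogeneous e) : D ≤ e := by
  obtain ⟨m, hm⟩ := MvPolynomial.ne_zero_iff.1 h0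
  obtain ⟨t, ht, htm⟩ := (mem_span_mon K T f).1 hf m (mem_support_iff.2 hm)
  have h1 : m.degree = e := by
    by_contra h
    exact hm (he.coeff_eq_zero h)
  rw [← hT t ht, ← h1]
  exact Finsupp.degree_mono htm

lemma prime_span_X {n : ℕ} (A : Set (Fin n)) :
    (Ideal.span (X '' A : Set (MvPolynomial (Fin n) K))).IsPrime := by
  classical
  set J := Ideal.span (X '' A : Set (MvPolynomial (Fin n) K)) with hJ
  let φ : MvPolynomial (Fin n) K →ₐ[K] MvPolynomial (Fin n) K :=
    aeval (fun i => if i ∈ A then 0 else X i)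
  have h1 : (Ideal.Quotient.mkₐ K J).comp φ = Ideal.Quotient.mkₐ K J := by
    apply MvPolynomial.algHom_ext
    intro i
    simp only [AlgHom.comp_apply, φ, aeval_X]
    split_ifs with h
    · rw [map_zero]
      symm
      rw [Ideal.Quotient.mkₐ_eq_mk, Ideal.Quotient.eq_zero_iff_mem]
      exact Ideal.subset_span ⟨i, h, rfl⟩
    · rfl
  have h2 : J = RingHom.ker φ := by
    apply le_antisymm
    · rw [hJ, Ideal.span_le]
      rintro _ ⟨i, hi, rfl⟩
      simp [φ, RingHom.mem_ker, hi]
    · intro g hg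
      have h3 := DFunLike.congr_fun h1 g
      rw [AlgHom.comp_apply, RingHom.mem_ker.1 hg, map_zero, Ideal.Quotient.mkₐ_eq_mk] at h3
      exact Ideal.Quotient.eq_zero_iff_mem.1 h3.symm
  rw [h2]
  exact RingHom.ker_isPrime _

lemma mem_colon_span {n : ℕ} (J : Ideal (MvPolynomial (Fin n) K)) (f g : MvPolynomial (Fin n) K) :
    g ∈ J.colon (Ideal.span {f}) ↔ g * f ∈ J := Ideal.mem_colon_span_singleton

lemma mem_assPrimes {n : ℕ} (J : Ideal (MvPolynomial (Fin n) K)) (f : MvPolynomial (Fin n) K)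
    (h : (J.colon (Ideal.span {f})).IsPrime) : J.colon (Ideal.span {f}) ∈ assPrimes K J := by
  refine ⟨h, Ideal.Quotient.mk J f, ?_⟩
  have : (⊥ : Submodule (MvPolynomial (Fin n) K) (MvPolynomial (Fin n) K ⧸ J)).colon
      {Ideal.Quotient.mk J f} = J.colon (Ideal.span {f}) := by
    ext g
    rw [mem_colon_span, Submodule.mem_colon_singleton, Submodule.mem_bot, ← Ideal.Quotient.eq_zero_iff_mem]
    exact Iff.rfl
  rw [this, h.radical]

/-- A colon ideal generated by variables. -/
lemma colon_eq {n : ℕ} {U : Finset (Fin n →₀ ℕ)} (hU : Exch U) {u : Fin n →₀ ℕ} (hu : u ∈ U)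
    {i : Fin n} (hi : 0 < u i) (k : ℕ) :
    (Ideal.span (mon K '' sumset U (k + 1))).colon
      (Ideal.span {mon K (k • u + (u - Finsupp.single i 1))}) =
    Ideal.span (X '' {j | (u - Finsupp.single i 1 + Finsupp.single j 1) ∈ U}) := by
  classical
  set w := k • u + (u - Finsupp.single i 1) with hw
  apply le_antisymm
  · intro g hg
    rw [mem_colon_span, mem_span_mon] at hg
    rw [mem_ideal_span_X_image]
    intro m hm
    obtain ⟨t, ht, htm⟩ := hg (m + w) (by
      rw [mem_support_iff, mon, coeff_mul_monomial, mul_one]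
      exact mem_support_iff.1 hm)
    let A : Finset (Fin n) := Finset.univ.filter
      fun j => (u - Finsupp.single i 1 + Finsupp.single j 1) ∈ U
    have hA : ∀ j, j ∈ A ↔ (u - Finsupp.single i 1 + Finsupp.single j 1) ∈ U := by simp [A]
    have h1 := sumset_min (fun v hv => key_min hU hu hi A hA _ v hv le_rfl) (k + 1) t ht
    have hiA : i ∈ A := by
      rw [hA]
      convert hu using 1
      ext l
      rw [swap_apply]
      split_ifs with h
      · subst h; omega
      · omega
    have h2 : ∑ j ∈ A, w j < (k + 1) * ∑ j ∈ A, u j := by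
      rw [Finset.mul_sum]
      apply Finset.sum_lt_sum
      · intro l _
        simp only [hw, Finsupp.add_apply, Finsupp.smul_apply, smul_eq_mul, Finsupp.tsub_apply,
          add_mul, one_mul]
        omega
      · refine ⟨i, hiA, ?_⟩
        simp only [hw, Finsupp.add_apply, Finsupp.smul_apply, smul_eq_mul, Finsupp.tsub_apply,
          add_mul, one_mul, Finsupp.single_eq_same]
        omega
    obtain ⟨j, hjA, hj⟩ := Finset.exists_lt_of_sum_lt (h2.trans_le h1)
    refine ⟨j, (hA j).1 hjA, ?_⟩
    have := htm j
    rw [Finsupp.add_apply] at this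
    omega
  · rw [Ideal.span_le]
    rintro _ ⟨j, hj, rfl⟩
    rw [SetLike.mem_coe, mem_colon_span]
    apply Ideal.subset_span
    refine ⟨k • u + (u - Finsupp.single i 1 + Finsupp.single j 1),
      ⟨_, nsmul_mem_sumset hu k, _, hj, rfl⟩, ?_⟩
    rw [mon, mon, X, monomial_mul, mul_one, hw]
    congr 1
    rw [add_comm (Finsupp.single j 1), add_assoc]

/-- For a polymatroidal ideal `I`, `v(I^k) = α(I)·k - 1` for all `k ≥ 1`. -/
theorem stmt16 {n : ℕ} (I : Ideal (MvPolynomial (Fin n) K))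
    (hI : IsPolymatroidal K I) :
    ∀ k : ℕ, 1 ≤ k → vNumber K (I ^ k) = initialDegree K I * k - 1 := by
  obtain ⟨U, d, ⟨hspan, -⟩, hd, hU⟩ := hI
  replace hU : Exch U := hU
  replace hd : ∀ m ∈ U, m.degree = d := hd
  intro k hk
  obtain ⟨k, rfl⟩ : ∃ l, k = l + 1 := ⟨k - 1, by omega⟩
  rcases U.eq_empty_or_nonempty with rfl | ⟨u, hu⟩
  · have hbot : I = ⊥ := by rw [hspan]; simp
    have h1 : initialDegree K I = 0 := by
      rw [initialDegree, hbot, Nat.sInf_eq_zero]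
      right
      ext e
      simp only [Set.mem_ofPred_eq, Set.mem_empty_iff_false, iff_false]
      rintro ⟨f, hf, h0, -⟩
      exact h0 hf
    rw [h1, zero_mul, Nat.zero_sub, vNumber, Nat.sInf_eq_zero]
    left
    refine ⟨1, isHomogeneous_one _ _, mem_assPrimes K _ _ ?_⟩
    have : (I ^ (k + 1)).colon (Ideal.span {(1 : MvPolynomial (Fin n) K)}) = ⊥ := by
      ext g
      rw [mem_colon_span, hbot, mul_one, ← Ideal.zero_eq_bot, zero_pow (by omega)]
    rw [this]
    exact Ideal.isPrime_bot
  have hmon0 : ∀ m : Fin n →₀ ℕ, mon K m ≠ 0 := fun m => by simp [mon]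
  have hα : initialDegree K I = d := by
    apply le_antisymm
    · apply Nat.sInf_le
      exact ⟨mon K u, hspan ▸ Ideal.subset_span ⟨u, hu, rfl⟩, hmon0 u,
        isHomogeneous_monomial _ (hd u hu)⟩
    · apply le_csInf
      · exact ⟨d, mon K u, hspan ▸ Ideal.subset_span ⟨u, hu, rfl⟩, hmon0 u,
          isHomogeneous_monomial _ (hd u hu)⟩
      · rintro e ⟨f, hf, h0, he⟩
        rw [hspan] at hf
        exact span_mon_degree_le K hd hf h0 he
  have hpow : I ^ (k + 1) = Ideal.span (mon K '' sumset U (k + 1)) := by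
    rw [hspan, pow_eq_span]
  rw [hα]
  have hlow : ∀ e ∈ {e | ∃ f : MvPolynomial (Fin n) K, f.IsHomogeneous e ∧
      (I ^ (k + 1)).colon (Ideal.span {f}) ∈ assPrimes K (I ^ (k + 1))},
      d * (k + 1) ≤ e + 1 ∧ d ≠ 0 := by
    rintro e ⟨f, he, hP, -⟩
    have hf0 : f ≠ 0 := by
      rintro rfl
      apply hP.ne_top
      rw [Ideal.eq_top_iff_one, mem_colon_span, mul_zero]
      exact zero_mem _
    have hmem : mon K ((k + 1) • u) ∈ (I ^ (k + 1)).colon (Ideal.span {f}) := by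
      rw [mem_colon_span]
      apply Ideal.mul_mem_right
      rw [hpow]
      exact Ideal.subset_span ⟨_, nsmul_mem_sumset hu _, rfl⟩
    have hex : ∃ i, (X i : MvPolynomial (Fin n) K) ∈ (I ^ (k + 1)).colon (Ideal.span {f}) ∧
        u i ≠ 0 := by
      rw [mon, monomial_eq, map_one, one_mul, Finsupp.prod, hP.prod_mem_iff] at hmem
      obtain ⟨i, hi, hi'⟩ := hmem
      refine ⟨i, hP.mem_of_pow_mem _ hi', ?_⟩
      intro h
      simp [h] at hi
    obtain ⟨i, hi, hui⟩ := hex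
    constructor
    · rw [mem_colon_span, hpow] at hi
      have := span_mon_degree_le K (sumset_degree hd (k + 1)) hi
        (mul_ne_zero (X_ne_zero i) hf0) ((isHomogeneous_X K i).mul he)
      omega
    · rintro rfl
      have h0 := hd u hu
      rw [Finsupp.degree_eq_zero_iff] at h0
      exact hui (by rw [h0]; rfl)
  rcases Nat.eq_zero_or_pos d with h0 | hpos
  · subst h0
    rw [zero_mul, Nat.zero_sub, vNumber, Nat.sInf_eq_zero]
    right
    rw [Set.eq_empty_iff_forall_notMem]
    intro e he
    exact (hlow e he).2 rfl
  have hui : ∃ i, 0 < u i := by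
    by_contra h
    push Not at h
    have : u = 0 := by ext i; simpa using h i
    have h1 := hd u hu
    rw [this, map_zero] at h1
    omega
  obtain ⟨i, hi⟩ := hui
  have hin : d * (k + 1) - 1 ∈ {e | ∃ f : MvPolynomial (Fin n) K, f.IsHomogeneous e ∧
      (I ^ (k + 1)).colon (Ideal.span {f}) ∈ assPrimes K (I ^ (k + 1))} := by
    refine ⟨mon K (k • u + (u - Finsupp.single i 1)), isHomogeneous_monomial _ ?_,
      mem_assPrimes K _ _ ?_⟩
    · have h1 : (k • u + (u - Finsupp.single i 1)) + Finsupp.single i 1 = (k + 1) • u := by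
        rw [add_assoc, tsub_add_cancel_of_le (by simpa using Nat.succ_le_of_lt hi), succ_nsmul]
      have h2 := congrArg Finsupp.degree h1
      rw [sumset_degree hd _ _ (nsmul_mem_sumset hu (k + 1)), map_add,
        Finsupp.degree_single] at h2
      omega
    · rw [hpow, colon_eq K hU hu hi k]
      exact prime_span_X K _
  apply le_antisymm
  · exact Nat.sInf_le hin
  · apply le_csInf ⟨_, hin⟩
    intro e he
    have := (hlow e he).1
    omega

end
end

section
/- Let (P, ⪰) be a finite poset with P = {p_1,...,p_n} and let H_P ⊂ S = K[x_1,...,x_n,y_1,...,y_n] be its Hibi ideal. Then for every integer k ≥ 1, the set of associated primes of H_P^k is Ass(H_P^k) = { (x_i, y_j) : p_i ⪯ p_j }. -/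
open MvPolynomial

noncomputable section

variable (K : Type*) [Field K]

/-- The generator `u_𝓘 = (∏_{i ∈ 𝓘} x_i) (∏_{i ∉ 𝓘} y_i)` of the Hibi ideal attached to a
poset ideal `𝓘`; the variables are indexed by `P ⊕ P`, `x_i = X (inl i)`, `y_i = X (inr i)`. -/
def posetGen {P : Type*} [Fintype P] [DecidableEq P] (𝓘 : Finset P) :
    MvPolynomial (P ⊕ P) K :=
  (∏ i ∈ 𝓘, X (Sum.inl i)) * ∏ i ∈ 𝓘ᶜ, X (Sum.inr i)

/-- The Hibi ideal of a finite poset `P`, generated by the monomials `u_𝓘` for all poset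
ideals (lower sets) `𝓘` of `P`. -/
def HibiIdeal (P : Type*) [Fintype P] [DecidableEq P] [PartialOrder P] :
    Ideal (MvPolynomial (P ⊕ P) K) :=
  Ideal.span {f | ∃ 𝓘 : Finset P, (∀ a b : P, a ≤ b → b ∈ 𝓘 → a ∈ 𝓘) ∧ f = posetGen K 𝓘}

/-- Weight counting the exponent of `x_i` plus that of `y_j`. -/
def hw {P : Type*} [DecidableEq P] (i j : P) : P ⊕ P → ℕ :=
  Sum.elim (Pi.single i 1) (Pi.single j 1)

theorem hw_weight {P : Type*} [Fintype P] [DecidableEq P] (i j : P) (d : P ⊕ P →₀ ℕ) :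
    Finsupp.weight (hw i j) d = d (Sum.inl i) + d (Sum.inr j) := by
  rw [Finsupp.weight_apply, Finsupp.sum_fintype _ _ (by simp)]
  simp [hw, Fintype.sum_sum_type, Pi.single_apply]

/-- The order along `(x_i, y_j)`. -/
def hv {P : Type*} [DecidableEq P] (i j : P) (f : MvPolynomial (P ⊕ P) K) : ℕ∞ :=
  MvPowerSeries.weightedOrder (hw i j) (f : MvPowerSeries (P ⊕ P) K)

theorem hv_mul {P : Type*} [DecidableEq P] (i j : P) (f g : MvPolynomial (P ⊕ P) K) :
    hv K i j (f * g) = hv K i j f + hv K i j g := by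
  simp [hv, MvPowerSeries.weightedOrder_mul]

theorem le_hv {P : Type*} [Fintype P] [DecidableEq P] (i j : P) (n : ℕ)
    (f : MvPolynomial (P ⊕ P) K) :
    (n : ℕ∞) ≤ hv K i j f ↔ ∀ d ∈ f.support, n ≤ d (Sum.inl i) + d (Sum.inr j) := by
  constructor
  · intro h d hd
    have h2 := MvPowerSeries.weightedOrder_le (hw i j) (f := (f : MvPowerSeries (P ⊕ P) K))
      (d := d) (by simpa using hd)
    rw [hw_weight] at h2
    exact_mod_cast h.trans h2
  · intro h
    apply MvPowerSeries.nat_le_weightedOrder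
    intro d hd
    rw [hw_weight] at hd
    by_contra hc
    have := h d (by simpa using hc)
    omega

/-- The ideal of polynomials of order at least `n`. -/
def hQ {P : Type*} [Fintype P] [DecidableEq P] (i j : P) (n : ℕ) :
    Ideal (MvPolynomial (P ⊕ P) K) where
  carrier := {f | (n : ℕ∞) ≤ hv K i j f}
  zero_mem' := by simp [hv]
  add_mem' := by
    intro f g hf hg
    have := MvPowerSeries.min_weightedOrder_le_add (hw i j)
      (f := (f : MvPowerSeries (P ⊕ P) K)) (g := (g : MvPowerSeries (P ⊕ P) K))
    simp only [Set.mem_setOf_eq, hv, coe_add] at *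
    exact (le_min hf hg).trans this
  smul_mem' := by
    intro c f hf
    simp only [Set.mem_setOf_eq, smul_eq_mul, hv_mul] at *
    exact hf.trans le_add_self

theorem mem_hQ {P : Type*} [Fintype P] [DecidableEq P] (i j : P) (n : ℕ)
    (f : MvPolynomial (P ⊕ P) K) : f ∈ hQ K i j n ↔ (n : ℕ∞) ≤ hv K i j f := Iff.rfl

theorem hQ_pow {P : Type*} [Fintype P] [DecidableEq P] (i j : P) (n : ℕ) :
    hQ K i j 1 ^ n ≤ hQ K i j n := by
  induction n with
  | zero => intro f _; simp [mem_hQ]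
  | succ n ih =>
    rw [pow_succ]
    refine Ideal.mul_le.2 fun f hf g hg => ?_
    have hf := ih hf
    rw [mem_hQ] at *
    rw [hv_mul]
    push_cast at *
    exact add_le_add hf hg

theorem hQ_one {P : Type*} [Fintype P] [DecidableEq P] (i j : P) :
    hQ K i j 1 = Ideal.span {(X (Sum.inl i) : MvPolynomial (P ⊕ P) K), X (Sum.inr j)} := by
  ext f
  have : ({X (Sum.inl i), X (Sum.inr j)} : Set (MvPolynomial (P ⊕ P) K))
      = Set.image X {Sum.inl i, Sum.inr j} := by
    simp [Set.image_pair]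
  rw [this, mem_ideal_span_X_image, mem_hQ, le_hv]
  refine forall₂_congr fun d _ => ?_
  simp
  omega

theorem hQ_prime {P : Type*} [Fintype P] [DecidableEq P] (i j : P) : (hQ K i j 1).IsPrime := by
  refine ⟨?_, ?_⟩
  · rw [Ne, Ideal.eq_top_iff_one, mem_hQ]
    simp [hv]
  · intro f g h
    simp only [mem_hQ, hv_mul, Nat.cast_one, ENat.one_le_iff_ne_zero] at *
    by_contra! hc
    simp [hc.1, hc.2] at h

/-- The exponent vector of `posetGen`. -/
def hexp {P : Type*} [Fintype P] [DecidableEq P] (I : Finset P) : P ⊕ P →₀ ℕ :=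
  Finsupp.equivFunOnFinite.symm
    (Sum.elim (fun p => if p ∈ I then 1 else 0) (fun p => if p ∈ I then 0 else 1))

theorem posetGen_eq {P : Type*} [Fintype P] [DecidableEq P] (I : Finset P) :
    posetGen K I = monomial (hexp I) 1 := by
  rw [monomial_eq, Finsupp.prod_fintype _ _ (by simp), Fintype.prod_sum_type]
  simp only [posetGen, hexp, map_one, one_mul, Finsupp.equivFunOnFinite_symm_apply_apply,
    Sum.elim_inl, Sum.elim_inr]
  congr 1
  · rw [← Finset.prod_subset (Finset.subset_univ I)]
    · exact Finset.prod_congr rfl (by simp +contextual)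
    · simp +contextual
  · rw [← Finset.prod_subset (Finset.subset_univ Iᶜ)]
    · exact Finset.prod_congr rfl (by simp +contextual)
    · simp +contextual

theorem hibi_le_hQ {P : Type*} [Fintype P] [DecidableEq P] [PartialOrder P] (i j : P)
    (hij : i ≤ j) : HibiIdeal K P ≤ hQ K i j 1 := by
  classical
  refine Ideal.span_le.2 ?_
  rintro f ⟨I, hI, rfl⟩
  rw [SetLike.mem_coe, mem_hQ, le_hv, posetGen_eq]
  intro d hd
  rw [support_monomial, if_neg one_ne_zero, Finset.mem_singleton] at hd
  subst hd
  have := hI i j hij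
  simp only [hexp, Finsupp.equivFunOnFinite_symm_apply_apply, Sum.elim_inl, Sum.elim_inr]
  split_ifs <;> simp_all

theorem mem_hibi_pow {P : Type*} [Fintype P] [DecidableEq P] [PartialOrder P] (k : ℕ)
    (f : MvPolynomial (P ⊕ P) K) :
    f ∈ HibiIdeal K P ^ k ↔ ∀ i j : P, i ≤ j → (k : ℕ∞) ≤ hv K i j f := by
  constructor
  · intro h i j hij
    exact hQ_pow K i j k (Ideal.pow_right_mono (hibi_le_hQ K i j hij) k h)
  · intro h
    rw [f.as_sum]
    refine Ideal.sum_mem _ fun d hd => ?_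
    replace h : ∀ i j : P, i ≤ j → k ≤ d (Sum.inl i) + d (Sum.inr j) :=
      fun i j hij => (le_hv K i j k f).1 (h i j hij) d hd
    classical
    let I : ℕ → Finset P := fun t => Finset.univ.filter fun p => ∃ q, p ≤ q ∧ d (Sum.inr q) ≤ t
    have hmem : ∏ t ∈ Finset.range k, posetGen K (I t) ∈ HibiIdeal K P ^ k := by
      have := Ideal.prod_mem_prod (s := Finset.range k) (I := fun _ => HibiIdeal K P)
        (x := fun t => posetGen K (I t)) (fun t _ => Ideal.subset_span ⟨I t, ?_, rfl⟩)
      · simpa using this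
      · intro a b hab hb
        simp only [I, Finset.mem_filter, Finset.mem_univ, true_and] at *
        obtain ⟨q, hq, hq2⟩ := hb
        exact ⟨q, hab.trans hq, hq2⟩
    refine Ideal.mem_of_dvd _ ?_ hmem
    simp_rw [posetGen_eq]
    rw [← monomial_sum_one, monomial_dvd_monomial]
    refine ⟨Or.inr ?_, one_dvd _⟩
    rintro (p | p)
    · simp only [Finsupp.finset_sum_apply, hexp, Finsupp.equivFunOnFinite_symm_apply_apply,
        Sum.elim_inl]
      rw [← Finset.card_filter]
      calc _ ≤ (Finset.Ico (k - d (Sum.inl p)) k).card := by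
            refine Finset.card_le_card fun t ht => ?_
            simp only [I, Finset.mem_filter, Finset.mem_univ, true_and, Finset.mem_range,
              Finset.mem_Ico] at *
            obtain ⟨htk, q, hq, hq2⟩ := ht
            have := h p q hq
            omega
        _ ≤ _ := by rw [Nat.card_Ico]; omega
    · simp only [Finsupp.finset_sum_apply, hexp, Finsupp.equivFunOnFinite_symm_apply_apply,
        Sum.elim_inr]
      calc _ = ∑ t ∈ Finset.range k, if p ∉ I t then 1 else 0 := by simp only [ite_not]
        _ = _ := (Finset.card_filter _ _).symm
        _ ≤ (Finset.range (d (Sum.inr p))).card := by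
            refine Finset.card_le_card fun t ht => ?_
            simp only [I, Finset.mem_filter, Finset.mem_univ, true_and, Finset.mem_range,
              not_exists, not_and, not_le] at *
            exact ht.2 p le_rfl
        _ = _ := Finset.card_range _

/-- A prime containing `(H^k : f)`, where only the pairs with small order matter,
contains one of the primes `(x_i,y_j)`. -/
theorem exists_hQ_le {P : Type*} [Fintype P] [DecidableEq P] [PartialOrder P] (k : ℕ)
    (f : MvPolynomial (P ⊕ P) K) (q : Ideal (MvPolynomial (P ⊕ P) K)) (hq : q.IsPrime)
    (h : ∀ g, g * f ∈ HibiIdeal K P ^ k → g ∈ q) :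
    ∃ i j : P, i ≤ j ∧ ¬ (k : ℕ∞) ≤ hv K i j f ∧ hQ K i j 1 ≤ q := by
  classical
  let T : Finset (P × P) :=
    Finset.univ.filter fun a => a.1 ≤ a.2 ∧ ¬ (k : ℕ∞) ≤ hv K a.1 a.2 f
  have hle : ∏ a ∈ T, hQ K a.1 a.2 1 ^ k ≤ q := by
    intro g hg
    apply h
    rw [mem_hibi_pow]
    intro i j hij
    rw [hv_mul]
    by_cases hc : (k : ℕ∞) ≤ hv K i j f
    · exact hc.trans le_add_self
    · have hT : (i, j) ∈ T := by simpa [T, hij] using hc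
      have : g ∈ hQ K i j k :=
        hQ_pow K i j k (Ideal.le_of_dvd (Finset.dvd_prod_of_mem _ hT) hg)
      exact ((mem_hQ K i j k g).1 this).trans le_self_add
  obtain ⟨a, haT, ha⟩ := (Ideal.IsPrime.prod_le hq).1 hle
  simp only [T, Finset.mem_filter, Finset.mem_univ, true_and] at haT
  exact ⟨a.1, a.2, haT.1, haT.2, Ideal.IsPrime.le_of_pow_le ha⟩

/-- For every `k ≥ 1`, the associated primes of the `k`-th power of a Hibi ideal are
exactly the primes `(x_i, y_j)` with `p_i ⪯ p_j`. -/
theorem stmt17 (P : Type*) [Fintype P] [DecidableEq P] [PartialOrder P] :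
    ∀ k : ℕ, 1 ≤ k →
      assPrimes K ((HibiIdeal K P) ^ k) =
        {q | ∃ i j : P, i ≤ j ∧
          q = Ideal.span {(X (Sum.inl i) : MvPolynomial (P ⊕ P) K), X (Sum.inr j)}} := by
  intro k hk
  ext q
  constructor
  · intro h
    obtain ⟨hq, x, hx⟩ := Submodule.isAssociatedPrime_iff.1 h
    obtain ⟨f, rfl⟩ := Ideal.Quotient.mk_surjective x
    have hmem : ∀ g, g ∈ q ↔ g * f ∈ HibiIdeal K P ^ k := by
      intro g
      rw [hx, Submodule.mem_colon_singleton, Submodule.mem_bot, ← Ideal.Quotient.eq_zero_iff_mem,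
        map_mul]
      rfl
    obtain ⟨i, j, hij, hf, hle⟩ := exists_hQ_le K k f q hq fun g => (hmem g).2
    refine ⟨i, j, hij, ?_⟩
    rw [← hQ_one]
    refine le_antisymm (fun g hg => ?_) hle
    have := (mem_hibi_pow K k _).1 ((hmem g).1 hg) i j hij
    rw [hv_mul] at this
    rw [mem_hQ, Nat.cast_one, ENat.one_le_iff_ne_zero]
    intro h0
    rw [h0, zero_add] at this
    exact hf this
  · rintro ⟨i, j, hij, rfl⟩
    apply Module.associatedPrimes.minimalPrimes_annihilator_subset_associatedPrimes
    rw [Ideal.annihilator_quotient, ← hQ_one]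
    have hp := hQ_prime K i j
    refine ⟨⟨hp, ?_⟩, ?_⟩
    · exact (Ideal.pow_le_self (by omega)).trans (hibi_le_hQ K i j hij)
    · rintro q ⟨hq, hHq⟩ hqle
      obtain ⟨a, b, hab, -, hle⟩ := exists_hQ_le K k 1 q hq fun g hg => hHq (by simpa using hg)
      have h1 := hle.trans hqle
      have hX : ∀ v, X v ∈ hQ K i j 1 → v = Sum.inl i ∨ v = Sum.inr j := by
        intro v hv
        rw [mem_hQ, le_hv] at hv
        have := hv (Finsupp.single v 1) (by simp [X, coeff_monomial])
        by_contra! hc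
        simp [Finsupp.single_apply, hc.1, hc.2] at this
      have ha := hX (Sum.inl a) (h1 (by rw [hQ_one]; exact Ideal.subset_span (by simp)))
      have hb := hX (Sum.inr b) (h1 (by rw [hQ_one]; exact Ideal.subset_span (by simp)))
      simp at ha hb
      subst ha hb
      exact hle

end
end

section
/- Let (P, ⪰) be a finite poset with Hibi ideal H_P ⊂ S = K[x_1,...,x_n,y_1,...,y_n]. Then v(H_P^k) = k·|P| − 1 for all k ≥ 1. -/
open MvPolynomial

noncomputable section

variable (K : Type*) [Field K]

theorem hibi_le (P : Type*) [Fintype P] [DecidableEq P] [PartialOrder P] :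
    HibiIdeal K P ≤ (idealOfVars (P ⊕ P) K) ^ Fintype.card P := by
  refine Ideal.span_le.2 ?_
  rintro _ ⟨A, -, rfl⟩
  have hX : ∀ v : P ⊕ P, (X v : MvPolynomial (P ⊕ P) K) ∈ idealOfVars (P ⊕ P) K :=
    fun v => Ideal.subset_span ⟨v, rfl⟩
  have h1 : (∏ i ∈ A, (X (Sum.inl i) : MvPolynomial (P ⊕ P) K)) ∈
      (idealOfVars (P ⊕ P) K) ^ A.card := by
    rw [← Finset.prod_const]
    exact Ideal.prod_mem_prod fun i _ => hX _
  have h2 : (∏ i ∈ Aᶜ, (X (Sum.inr i) : MvPolynomial (P ⊕ P) K)) ∈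
      (idealOfVars (P ⊕ P) K) ^ Aᶜ.card := by
    rw [← Finset.prod_const]
    exact Ideal.prod_mem_prod fun i _ => hX _
  have h3 := Ideal.mul_mem_mul h1 h2
  rw [← pow_add, Finset.card_add_card_compl] at h3
  exact h3

theorem degree_lower (P : Type*) [Fintype P] [DecidableEq P] [PartialOrder P] (k d : ℕ)
    (g : MvPolynomial (P ⊕ P) K) (hg : g ∈ HibiIdeal K P ^ k) (h0 : g ≠ 0)
    (hd : g.IsHomogeneous d) : k * Fintype.card P ≤ d := by
  have h1 : g ∈ idealOfVars (P ⊕ P) K ^ (Fintype.card P * k) := by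
    rw [pow_mul]
    exact Ideal.pow_right_mono (hibi_le K P) k hg
  obtain ⟨m, hm⟩ := MvPolynomial.ne_zero_iff.1 h0
  have h2 := (mem_pow_idealOfVars_iff _ _).1 h1 m (mem_support_iff.2 hm)
  have h3 := hd.degree_eq_sum_deg_support (mem_support_iff.2 hm)
  rw [mul_comm, h3]
  exact h2

theorem v_lower (P : Type*) [Fintype P] [DecidableEq P] [PartialOrder P] (k d : ℕ)
    (f : MvPolynomial (P ⊕ P) K) (hd : f.IsHomogeneous d)
    (hp : ((HibiIdeal K P ^ k).colon (Ideal.span {f})).IsPrime) :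
    k * Fintype.card P - 1 ≤ d := by
  have hf : f ≠ 0 := by
    rintro rfl
    apply hp.ne_top
    rw [Ideal.eq_top_iff_one, Ideal.mem_colon_span_singleton]
    simp
  have hu : posetGen K (∅ : Finset P) ^ k ∈ (HibiIdeal K P ^ k).colon (Ideal.span {f}) := by
    rw [Ideal.mem_colon_span_singleton]
    have hE : posetGen K (∅ : Finset P) ∈ HibiIdeal K P :=
      Ideal.subset_span ⟨∅, by simp, rfl⟩
    exact Ideal.mul_mem_right _ _ (Ideal.pow_mem_pow hE k)
  have hu' := hp.mem_of_pow_mem _ hu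
  have : ∃ i : P, (X (Sum.inr i) : MvPolynomial (P ⊕ P) K) ∈
      (HibiIdeal K P ^ k).colon (Ideal.span {f}) := by
    simp only [posetGen, Finset.prod_empty, one_mul] at hu'
    obtain ⟨i, -, hi⟩ := (hp.prod_mem_iff).1 hu'
    exact ⟨i, hi⟩
  obtain ⟨i, hi⟩ := this
  rw [Ideal.mem_colon_span_singleton] at hi
  have := degree_lower K P k (1 + d) _ hi (mul_ne_zero (X_ne_zero _) hf)
    ((isHomogeneous_X _ _).mul hd)
  omega

/-- the map killing `x_p`, `y_p`. -/
def killMap {P : Type*} [DecidableEq P] (p : P) :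
    MvPolynomial (P ⊕ P) K →ₐ[K] MvPolynomial (P ⊕ P) K :=
  aeval (Sum.elim (fun i => if i = p then 0 else X (Sum.inl i))
    (fun i => if i = p then 0 else X (Sum.inr i)))

/-- the map scaling `x_p`, `y_p` by a new variable. -/
def scaleMap {P : Type*} [DecidableEq P] (p : P) :
    MvPolynomial (P ⊕ P) K →ₐ[K] Polynomial (MvPolynomial (P ⊕ P) K) :=
  aeval (Sum.elim
    (fun i => Polynomial.C (X (Sum.inl i)) * if i = p then Polynomial.X else 1)
    (fun i => Polynomial.C (X (Sum.inr i)) * if i = p then Polynomial.X else 1))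

theorem scale_coeff {P : Type*} [DecidableEq P] (p : P) (g : MvPolynomial (P ⊕ P) K) :
    (scaleMap K p g).coeff 0 = killMap K p g := by
  have : (Polynomial.constantCoeff.comp (scaleMap K p).toRingHom) =
      (killMap K p).toRingHom := by
    apply MvPolynomial.ringHom_ext
    · intro r
      simp [scaleMap, killMap, Polynomial.algebraMap_apply, algebraMap_eq]
    · rintro (i | i) <;> by_cases h : i = p <;> simp [scaleMap, killMap, h]
  exact congrArg (fun φ => φ g) this

theorem kill_mem {P : Type*} [DecidableEq P] (p : P) (g : MvPolynomial (P ⊕ P) K)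
    (J : Ideal (MvPolynomial (P ⊕ P) K)) (h1 : X (Sum.inl p) ∈ J) (h2 : X (Sum.inr p) ∈ J)
    (hg : killMap K p g = 0) : g ∈ J := by
  have : (Ideal.Quotient.mk J).comp (killMap K p).toRingHom = Ideal.Quotient.mk J := by
    apply MvPolynomial.ringHom_ext
    · intro r
      simp [killMap, algebraMap_eq]
    · rintro (i | i) <;> by_cases h : i = p
      · subst h; simp [killMap, Ideal.Quotient.eq_zero_iff_mem.2 h1]
      · simp [killMap, h]
      · subst h; simp [killMap, Ideal.Quotient.eq_zero_iff_mem.2 h2]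
      · simp [killMap, h]
  have h := congrArg (fun φ => φ g) this
  rw [← Ideal.Quotient.eq_zero_iff_mem, ← h]
  simp [hg]

theorem scale_gen {P : Type*} [Fintype P] [DecidableEq P] (p : P) (A : Finset P) :
    scaleMap K p (posetGen K A) = Polynomial.C (posetGen K A) * Polynomial.X := by
  have : (∏ i ∈ A, if i = p then (Polynomial.X : Polynomial (MvPolynomial (P ⊕ P) K)) else 1) *
      (∏ i ∈ Aᶜ, if i = p then Polynomial.X else 1) = Polynomial.X := by
    rw [Finset.prod_mul_prod_compl]
    simp
  simp only [posetGen, map_mul, map_prod, scaleMap, aeval_X, Sum.elim_inl, Sum.elim_inr,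
    Finset.prod_mul_distrib]
  rw [mul_mul_mul_comm, this]

theorem scale_pow {P : Type*} [Fintype P] [DecidableEq P] [PartialOrder P] (p : P) (k : ℕ)
    (g : MvPolynomial (P ⊕ P) K) (hg : g ∈ HibiIdeal K P ^ k) :
    Polynomial.X ^ k ∣ scaleMap K p g := by
  have h : HibiIdeal K P ≤ (Ideal.span {Polynomial.X}).comap (scaleMap K p) := by
    refine Ideal.span_le.2 ?_
    rintro _ ⟨A, -, rfl⟩
    change scaleMap K p (posetGen K A) ∈
      (Ideal.span {Polynomial.X} : Ideal (Polynomial (MvPolynomial (P ⊕ P) K)))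
    rw [scale_gen]
    exact Ideal.mul_mem_left _ _ (Ideal.mem_span_singleton_self _)
  have h2 := Ideal.le_comap_pow (K := Ideal.span {Polynomial.X}) (scaleMap K p) k
    (Ideal.pow_right_mono h k hg)
  rw [Ideal.mem_comap, Ideal.span_singleton_pow, Ideal.mem_span_singleton] at h2
  exact h2

/-- The witness. -/
def wit {P : Type*} [Fintype P] [DecidableEq P] (p : P) (k : ℕ) : MvPolynomial (P ⊕ P) K :=
  posetGen K (∅ : Finset P) ^ k * ∏ i ∈ Finset.univ.erase p, X (Sum.inr i)

theorem wit_ne {P : Type*} [Fintype P] [DecidableEq P] (p : P) (k : ℕ) : wit K p k ≠ 0 := by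
  simp [wit, posetGen, Finset.prod_ne_zero_iff, X_ne_zero]

theorem scale_wit {P : Type*} [Fintype P] [DecidableEq P] (p : P) (k : ℕ) :
    scaleMap K p (wit K p k) = Polynomial.C (wit K p k) * Polynomial.X ^ k := by
  have : scaleMap K p (∏ i ∈ Finset.univ.erase p, X (Sum.inr i)) =
      Polynomial.C (∏ i ∈ Finset.univ.erase p, X (Sum.inr i)) := by
    rw [map_prod, map_prod]
    refine Finset.prod_congr rfl fun i hi => ?_
    simp [scaleMap, Finset.ne_of_mem_erase hi]
  rw [wit, map_mul, map_pow, scale_gen, this]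
  simp only [map_mul, map_pow]
  ring

theorem wit_hom {P : Type*} [Fintype P] [DecidableEq P] (p : P) (k : ℕ) :
    (wit K p k).IsHomogeneous ((k + 1) * Fintype.card P - 1) := by
  have h1 : (posetGen K (∅ : Finset P)).IsHomogeneous (Fintype.card P) := by
    have := IsHomogeneous.prod (Finset.univ : Finset P)
      (fun i => (X (Sum.inr i) : MvPolynomial (P ⊕ P) K)) (fun _ => 1)
      (fun i _ => isHomogeneous_X _ _)
    simpa [posetGen] using this
  have h2 := IsHomogeneous.prod (Finset.univ.erase p : Finset P)
      (fun i => (X (Sum.inr i) : MvPolynomial (P ⊕ P) K)) (fun _ => 1)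
      (fun i _ => isHomogeneous_X _ _)
  have h3 := (h1.pow k).mul h2
  have hc : 0 < Fintype.card P := Fintype.card_pos_iff.2 ⟨p⟩
  have e : (k + 1) * Fintype.card P - 1 =
      Fintype.card P * k + ∑ i ∈ (Finset.univ.erase p : Finset P), 1 := by
   simp only [Finset.sum_const, smul_eq_mul, mul_one, Finset.card_erase_of_mem (Finset.mem_univ p),
    Finset.card_univ]
   rw [add_mul, one_mul, mul_comm, Nat.add_sub_assoc hc]
  rw [e]
  exact h3

theorem wit_colon {P : Type*} [Fintype P] [DecidableEq P] [PartialOrder P] (p : P)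
    (hp : ∀ a, a ≤ p → a = p) (k : ℕ) :
    (HibiIdeal K P ^ (k + 1)).colon (Ideal.span {wit K p k}) =
      RingHom.ker (killMap K p) := by
  have hE : posetGen K (∅ : Finset P) ∈ HibiIdeal K P :=
    Ideal.subset_span ⟨∅, by simp, rfl⟩
  have hS : posetGen K ({p} : Finset P) ∈ HibiIdeal K P :=
    Ideal.subset_span ⟨{p}, by
      intro a b hab hb
      rw [Finset.mem_singleton] at hb ⊢
      subst hb
      exact hp a hab, rfl⟩
  have e1 : (X (Sum.inl p) : MvPolynomial (P ⊕ P) K) *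
      ∏ i ∈ Finset.univ.erase p, X (Sum.inr i) = posetGen K ({p} : Finset P) := by
    rw [posetGen, Finset.prod_singleton]
    congr 2
    ext i
    simp
  have e2 : (X (Sum.inr p) : MvPolynomial (P ⊕ P) K) *
      ∏ i ∈ Finset.univ.erase p, X (Sum.inr i) = posetGen K (∅ : Finset P) := by
    rw [posetGen, Finset.prod_empty, one_mul, Finset.compl_empty]
    exact Finset.mul_prod_erase _ (fun i => (X (Sum.inr i) : MvPolynomial (P ⊕ P) K))
      (Finset.mem_univ p)
  ext g
  constructor
  · intro hg
    rw [Ideal.mem_colon_span_singleton] at hg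
    have h := scale_pow K p _ _ hg
    rw [map_mul, scale_wit, pow_succ', ← mul_assoc] at h
    have h' := (mul_dvd_mul_iff_right (pow_ne_zero k Polynomial.X_ne_zero)).1 h
    rw [Polynomial.X_dvd_iff, Polynomial.mul_coeff_zero, scale_coeff,
      Polynomial.coeff_C_zero] at h'
    exact (mul_eq_zero.1 h').resolve_right (wit_ne K p k)
  · intro hg
    refine kill_mem K p g _ ?_ ?_ hg
    · rw [Ideal.mem_colon_span_singleton, wit, mul_left_comm, e1, pow_succ]
      exact Ideal.mul_mem_mul (Ideal.pow_mem_pow hE k) hS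
    · rw [Ideal.mem_colon_span_singleton, wit, mul_left_comm, e2, pow_succ]
      exact Ideal.mul_mem_mul (Ideal.pow_mem_pow hE k) hE

theorem colon_ass {σ : Type*} (I : Ideal (MvPolynomial σ K)) (f : MvPolynomial σ K)
    (hp : (I.colon (Ideal.span {f})).IsPrime) :
    I.colon (Ideal.span {f}) ∈ assPrimes K I := by
  refine ⟨hp, Ideal.Quotient.mk I f, ?_⟩
  have : (⊥ : Submodule (MvPolynomial σ K) (MvPolynomial σ K ⧸ I)).colon
      {Ideal.Quotient.mk I f} = I.colon (Ideal.span {f}) := by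
    ext g
    rw [Submodule.mem_colon_singleton, Ideal.mem_colon_span_singleton, Submodule.mem_bot,
      ← Ideal.Quotient.eq_zero_iff_mem, map_mul]
    rfl
  rw [this, hp.radical]

/-- For a Hibi ideal `H_P`, `v(H_P^k) = k·|P| - 1` for all `k ≥ 1`. -/
theorem stmt19 (P : Type*) [Fintype P] [DecidableEq P] [PartialOrder P] :
    ∀ k : ℕ, 1 ≤ k →
      vNumber K ((HibiIdeal K P) ^ k) = k * Fintype.card P - 1 := by
  intro k hk
  rcases isEmpty_or_nonempty P with hP | hP
  · have hd : (0 : ℕ) = k * Fintype.card P - 1 := by simp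
    rw [← hd]
    have hT : HibiIdeal K P ^ k = ⊤ := by
      have : (1 : MvPolynomial (P ⊕ P) K) ∈ HibiIdeal K P :=
        Ideal.subset_span ⟨∅, by simp, by simp [posetGen]⟩
      rw [(Ideal.eq_top_iff_one _).2 this, Ideal.top_pow]
    rw [vNumber, Nat.sInf_eq_zero]
    right
    ext d
    simp only [Set.mem_ofPred_eq, Set.mem_empty_iff_false, iff_false]
    rintro ⟨f, -, hf⟩
    apply hf.1.ne_top
    rw [Ideal.eq_top_iff_one, Ideal.mem_colon_span_singleton, hT]
    trivial
  · obtain ⟨p, hp⟩ := (Set.finite_univ (α := P)).exists_minimal Set.univ_nonempty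
    have hp' : ∀ a, a ≤ p → a = p := fun a ha => le_antisymm ha (hp.2 trivial ha)
    obtain ⟨k, rfl⟩ : ∃ j, k = j + 1 := ⟨k - 1, by omega⟩
    have hmem : (k + 1) * Fintype.card P - 1 ∈ {d | ∃ f : MvPolynomial (P ⊕ P) K,
        f.IsHomogeneous d ∧ (HibiIdeal K P ^ (k + 1)).colon (Ideal.span {f}) ∈
          assPrimes K (HibiIdeal K P ^ (k + 1))} := by
      refine ⟨wit K p k, wit_hom K p k, colon_ass K _ _ ?_⟩
      rw [wit_colon K p hp' k]
      exact RingHom.ker_isPrime _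
    refine le_antisymm (Nat.sInf_le hmem) (le_csInf ⟨_, hmem⟩ ?_)
    rintro d ⟨f, hd, hf⟩
    exact v_lower K P _ d f hd hf.1

end
end
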